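/- Let K be an infinite field, S = K[x_1,...,x_n], and fix an integer j. Let I ⊆ S and J ⊆ S be homogeneous ideals and let >_σ be any term order on the monomials of S. Then for a general change of coordinates h ∈ GL_n(K), one has dim_K Tor_i^S(S/I, S/h(J))_j ≤ dim_K Tor_i^S(S/in_σ(I), S/h(J))_j for all i ≥ 0. -/

import Mathlib

open MvPolynomial TensorProduct CategoryTheory

noncomputable section

/-- The polynomial ring `S = K[x_1,...,x_n]`, standard graded. -/
abbrev PS (K : Type) [Field K] (n : ℕ) : Type := MvPolynomial (Fin n) K

variable (K : Type) [Field K] (n : ℕ)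

/-- An ideal of `S` is homogeneous if it contains all homogeneous components of its
elements. -/
def IsHomog (I : Ideal (PS K n)) : Prop :=
  ∀ f ∈ I, ∀ d : ℕ, MvPolynomial.homogeneousComponent d f ∈ I

/-- The change of coordinates of `S` induced by `g ∈ GL_n(K)`, determined by
`g(x_i) = ∑_j g_{ji} x_j`. -/
def coordChange (g : GL (Fin n) K) : PS K n →ₐ[K] PS K n :=
  MvPolynomial.aeval (fun i => ∑ j, ((g : Matrix (Fin n) (Fin n) K) j i) • MvPolynomial.X j)

/-- A property `P` holds for a general change of coordinates `g ∈ GL_n(K)` if there is a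
nonempty Zariski open subset `U ⊆ GL_n(K)` on which it holds; equivalently (as `GL_n(K)` is
an irreducible variety over the infinite field `K`) there is a nonzero polynomial `F` in the
matrix entries such that `P g` holds whenever `F` does not vanish at `g`. -/
def generally (P : GL (Fin n) K → Prop) : Prop :=
  ∃ F : MvPolynomial (Fin n × Fin n) K, F ≠ 0 ∧
    ∀ g : GL (Fin n) K,
      MvPolynomial.eval (fun p => (g : Matrix (Fin n) (Fin n) K) p.1 p.2) F ≠ 0 → P g

/-- The standard grading of `S = K[x_1,...,x_n]`, extended to `ℤ` (zero in negative
degrees). -/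
def polyGrade (d : ℤ) : Submodule K (PS K n) :=
  if 0 ≤ d then homogeneousSubmodule (Fin n) K d.toNat else ⊥

/-- The degree `d` component of the (internal) tensor-product grading on `A ⊗[K] B`. -/
def tensorGrade {A B : Type} [AddCommGroup A] [Module K A] [AddCommGroup B] [Module K B]
    (GA : ℤ → Submodule K A) (GB : ℤ → Submodule K B) (d : ℤ) :
    Submodule K (A ⊗[K] B) :=
  ⨆ p : ℤ, LinearMap.range (TensorProduct.map (GA p).subtype (GB (d - p)).subtype)

variable (N : Type) [AddCommGroup N] [Module K N] [Module (PS K n) N]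
  [IsScalarTower K (PS K n) N]

/-- The tower of `K`-vector spaces `D_i = S^{⊗ i} ⊗_K N` appearing in the bar complex
`M ⊗_K S^{⊗ i} ⊗_K N`, which computes `Tor^S_i(M, N)`. -/
def barD : ℕ → ModuleCat K
  | 0 => ModuleCat.of K N
  | (i + 1) => ModuleCat.of K (PS K n ⊗[K] (barD i))

/-- The internal `ℤ`-grading on `D_i = S^{⊗ i} ⊗_K N` induced by the standard grading of
`S` and a grading `GN` of `N`. -/
def barDGrade (GN : ℤ → Submodule K N) : (i : ℕ) → ℤ → Submodule K (barD K n N i)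
  | 0 => GN
  | (i + 1) => tensorGrade K (polyGrade K n) (barDGrade GN i)

/-- Scalar multiplication `S → N → N` as a `K`-bilinear map. -/
def smulBilin : PS K n →ₗ[K] N →ₗ[K] N :=
  LinearMap.mk₂ K (fun s x => s • x)
    (fun s₁ s₂ x => add_smul s₁ s₂ x)
    (fun c s x => smul_assoc c s x)
    (fun s x y => smul_add s x y)
    (fun c s x => (smul_comm c s x).symm)

/-- The "contraction" part of the bar differential, `c_i : D_{i+1} → D_i`, defined
recursively by `c_0(s ⊗ x) = s • x` and
`c_{i+1}(s ⊗ s' ⊗ t) = (s s') ⊗ t - s ⊗ c_i(s' ⊗ t)`. -/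
def barC : (i : ℕ) → ((barD K n N (i + 1)) →ₗ[K] (barD K n N i))
  | 0 => TensorProduct.lift (smulBilin K n N)
  | (i + 1) =>
      (TensorProduct.map (LinearMap.mul' K (PS K n)) LinearMap.id).comp
        (TensorProduct.assoc K (PS K n) (PS K n) (barD K n N i)).symm.toLinearMap
      - TensorProduct.map LinearMap.id (barC i)

variable (M : Type) [AddCommGroup M] [Module K M] [Module (PS K n) M]
  [IsScalarTower K (PS K n) M]

/-- Right scalar multiplication `M ⊗[K] S → M` as a `K`-linear map. -/
def smulMapM : M ⊗[K] PS K n →ₗ[K] M :=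
  TensorProduct.lift (LinearMap.mk₂ K (fun m s => s • m)
    (fun m₁ m₂ s => smul_add s m₁ m₂)
    (fun c m s => smul_comm s c m)
    (fun m s₁ s₂ => add_smul s₁ s₂ m)
    (fun c m s => smul_assoc c s m))

/-- The bar differential `b_i : M ⊗ D_{i+1} → M ⊗ D_i`,
`b(m ⊗ s ⊗ t) = (s • m) ⊗ t - m ⊗ c_i(s ⊗ t)`.  The complex
`⋯ → M ⊗_K S^{⊗ i} ⊗_K N → ⋯ → M ⊗_K S ⊗_K N → M ⊗_K N → 0`
is the bar complex `M ⊗_S Bar(S, N)`, whose `i`-th homology is `Tor^S_i(M, N)`;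
it is a complex of graded vector spaces with degree-preserving differentials. -/
def barB (i : ℕ) : (M ⊗[K] (barD K n N (i + 1))) →ₗ[K] (M ⊗[K] (barD K n N i)) :=
  (TensorProduct.map (smulMapM K n M) LinearMap.id).comp
      (TensorProduct.assoc K M (PS K n) (barD K n N i)).symm.toLinearMap
  - TensorProduct.map LinearMap.id (barC K n N i)

/-- `dim_K Tor_i^S(M, N)_j`, the dimension of the degree-`j` component of the graded module
`Tor_i^S(M, N)` for graded modules `M`, `N`: it is computed as the homology of the degree-`j`
strand of the bar complex, namely `dim (ker b_i)_j - dim (im b_{i+1})_j`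
(for `i = 0`, `dim (M ⊗_K N)_j - dim (im b_1)_j`). -/
def torStrandDim (GM : ℤ → Submodule K M) (GN : ℤ → Submodule K N) : ℕ → ℤ → ℕ
  | 0, j =>
      Module.finrank K ↥(tensorGrade K GM (barDGrade K n N GN 0) j) -
        Module.finrank K
          ↥(LinearMap.range (barB K n N M 0) ⊓ tensorGrade K GM (barDGrade K n N GN 0) j)
  | (i + 1), j =>
      Module.finrank K
          ↥(LinearMap.ker (barB K n N M i) ⊓
              tensorGrade K GM (barDGrade K n N GN (i + 1)) j) -
        Module.finrank K
          ↥(LinearMap.range (barB K n N M (i + 1)) ⊓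
              tensorGrade K GM (barDGrade K n N GN (i + 1)) j)

/-- The quotient grading on `S/J`. -/
def quotGrade (J : Ideal (PS K n)) : ℤ → Submodule K (PS K n ⧸ J) := fun d =>
  (polyGrade K n d).map (Ideal.Quotient.mkₐ K J).toLinearMap

/-- The grading on an ideal `I ⊆ S` viewed as an `S`-module. -/
def idealGrade (I : Ideal (PS K n)) : ℤ → Submodule K ↥I := fun d =>
  (polyGrade K n d).comap ((Submodule.subtype I).restrictScalars K)

/-- `dim_K Tor_i^S(S/I, S/J)_j`. -/
def torQQ (I J : Ideal (PS K n)) (i : ℕ) (j : ℤ) : ℕ :=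
  torStrandDim K n (PS K n ⧸ J) (PS K n ⧸ I) (quotGrade K n I) (quotGrade K n J) i j

/-- `dim_K Tor_i^S(I, S/J)_j`. -/
def torIQ (I J : Ideal (PS K n)) (i : ℕ) (j : ℤ) : ℕ :=
  torStrandDim K n (PS K n ⧸ J) ↥I (idealGrade K n I) (quotGrade K n J) i j

/-- `a <_lex b` for the lexicographic order induced by `x_1 > x_2 > ⋯ > x_n`. -/
def lexLt (a b : Fin n →₀ ℕ) : Prop := Finsupp.Lex (· < ·) (· < ·) a b

/-- `a <_oplex b` for the (opposite) lexicographic order induced by `x_n > ⋯ > x_1`. -/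
def oplexLt (a b : Fin n →₀ ℕ) : Prop := Finsupp.Lex (· > ·) (· < ·) a b

/-- The total degree of an exponent vector. -/
def expDeg (m : Fin n →₀ ℕ) : ℕ := ∑ i, m i

/-- A monomial ideal: together with any polynomial it contains each of its monomials. -/
def IsMonomialIdeal (I : Ideal (PS K n)) : Prop :=
  ∀ f ∈ I, ∀ m ∈ f.support, MvPolynomial.monomial m (1 : K) ∈ I

/-- A lex ideal: a monomial ideal whose monomials form a lex set. -/
def IsLexIdeal (I : Ideal (PS K n)) : Prop :=
  IsMonomialIdeal K n I ∧ ∀ u v : Fin n →₀ ℕ, expDeg n u = expDeg n v →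
    MvPolynomial.monomial u (1 : K) ∈ I → lexLt n u v →
      MvPolynomial.monomial v (1 : K) ∈ I

/-- An opposite lex ideal: a monomial ideal whose monomials form an opposite lex set. -/
def IsOplexIdeal (I : Ideal (PS K n)) : Prop :=
  IsMonomialIdeal K n I ∧ ∀ u v : Fin n →₀ ℕ, expDeg n u = expDeg n v →
    MvPolynomial.monomial u (1 : K) ∈ I → oplexLt n u v →
      MvPolynomial.monomial v (1 : K) ∈ I

/-- The initial ideal `in_r(I)` of `I` with respect to a (strict) monomial order `r`:
the ideal generated by the `r`-maximal monomials of the nonzero elements of `I`. -/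
def initialIdealO (r : (Fin n →₀ ℕ) → (Fin n →₀ ℕ) → Prop) (I : Ideal (PS K n)) :
    Ideal (PS K n) :=
  Ideal.span {g | ∃ f ∈ I, ∃ m ∈ f.support,
    (∀ m' ∈ f.support, m' = m ∨ r m' m) ∧ g = MvPolynomial.monomial m (1 : K)}

/-!
Instead of moving `J`, twist the action of `S` on `S/I` by `g`: the rank in degree `j` of the
`i`-th bar differential for `S/I` and `S/g(J)` is the rank of a differential on the fixed space
`S/I ⊗ S^{⊗ i} ⊗ S/J` whose entries are polynomials in the entries of `g`. The standard monomials
form a basis of both `S/I` and `S/in_σ(I)`, so the chain spaces of the two sides have equal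
dimensions, and it suffices to compare ranks.

Composing `g` with a rescaling `x_i ↦ T_i x_i` and multiplying the columns by suitable monomials
in `T` turns the matrix entry in the row of `x^u ⊗ ⋯` into a polynomial in `T` with no monomial
`σ`-smaller than `T^u`, whose `T^u`-coefficient is the corresponding entry for `in_σ(I)`. A
nonzero minor for `in_σ(I)` is therefore the lowest coefficient of a minor for `I`, and as `K` is
infinite some `T` realizes at least the rank for `in_σ(I)`. Ranks being lower semicontinuous, so
does a general `g`. Only finitely many `i` matter: contracting the bar complex along the
constants of `S` shows that `Tor_i(S/I, S/J)_j` vanishes for `i > j`.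
-/

section Minors

variable {𝕜 V W ι : Type*} [Field 𝕜] [AddCommGroup V] [Module 𝕜 V] [AddCommGroup W] [Module 𝕜 W]

theorem exists_det_repr_ne_zero (b : Module.Basis ι 𝕜 W) {r : ℕ} {w : Fin r → W}
    (hw : LinearIndependent 𝕜 w) :
    ∃ k : Fin r → ι, (Matrix.of fun m l => b.repr (w l) (k m)).det ≠ 0 := by
  let row : ι → Fin r → 𝕜 := fun k l => b.repr (w l) k
  have rows_span : Submodule.span 𝕜 (Set.range row) = ⊤ := by
    by_contra hne
    obtain ⟨φ, hφ, hker⟩ := Submodule.exists_le_ker_of_lt_top _ (lt_top_iff_ne_top.mpr hne)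
    obtain ⟨c, rfl⟩ := (dotProductEquiv 𝕜 (Fin r)).surjective φ
    have hc : ∑ l, c l • w l = 0 := by
      apply b.repr.injective
      ext k
      have hk : c ⬝ᵥ row k = 0 := hker (Submodule.subset_span ⟨k, rfl⟩)
      simpa [Finsupp.finsetSum_apply, dotProduct, row] using hk
    have : c = 0 := funext (Fintype.linearIndependent_iff.mp hw c hc)
    exact hφ (by rw [this, map_zero])
  have hrows := Submodule.exists_fun_fin_finrank_span_eq 𝕜 (Set.range row)
  rw [rows_span, finrank_top, Module.finrank_fin_fun] at hrows
  obtain ⟨v, hv, -, hvli⟩ := hrows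
  choose k hk using hv
  refine ⟨k, ?_⟩
  have hunit : IsUnit (Matrix.of v) := Matrix.linearIndependent_rows_iff_isUnit.mp hvli
  rw [show (Matrix.of fun m l => b.repr (w l) (k m)) = Matrix.of v from funext hk]
  exact ((Matrix.isUnit_iff_isUnit_det _).mp hunit).ne_zero

theorem exists_minor_ne_zero_of_span (f : V →ₗ[𝕜] W) (s : Set V)
    [FiniteDimensional 𝕜 (Submodule.span 𝕜 s)] (b : Module.Basis ι 𝕜 W) {r : ℕ}
    (hr : Module.finrank 𝕜 ((Submodule.span 𝕜 s).map f) = r) :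
    ∃ x : Fin r → V, (∀ l, x l ∈ s) ∧
      ∃ k : Fin r → ι, (Matrix.of fun m l => b.repr (f (x l)) (k m)).det ≠ 0 := by
  have : FiniteDimensional 𝕜 (Submodule.span 𝕜 (f '' s)) := by
    rw [← Submodule.map_span]
    infer_instance
  have himage := Submodule.exists_fun_fin_finrank_span_eq 𝕜 (f '' s)
  rw [← Submodule.map_span, hr] at himage
  obtain ⟨w, hw, -, hwli⟩ := himage
  choose x hxs hxw using hw
  obtain rfl : (fun l => f (x l)) = w := funext hxw
  exact ⟨x, hxs, exists_det_repr_ne_zero b hwli⟩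

theorem le_finrank_map_of_det_ne_zero (f : V →ₗ[𝕜] W) {C : Submodule 𝕜 V} [FiniteDimensional 𝕜 C]
    {r : ℕ} {x : Fin r → V} (hx : ∀ l, x l ∈ C) (φ : Fin r → W →ₗ[𝕜] 𝕜)
    (hdet : (Matrix.of fun m l => φ m (f (x l))).det ≠ 0) :
    r ≤ Module.finrank 𝕜 (C.map f) := by
  have cols_li : LinearIndependent 𝕜 (Matrix.of fun m l => φ m (f (x l))).col := by
    rw [Matrix.linearIndependent_cols_iff_isUnit, Matrix.isUnit_iff_isUnit_det]
    exact hdet.isUnit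
  have images_li : LinearIndependent 𝕜 fun l => f (x l) :=
    LinearIndependent.of_comp (LinearMap.pi φ) cols_li
  have : LinearIndependent 𝕜
      fun l => (⟨f (x l), Submodule.mem_map_of_mem (hx l)⟩ : C.map f) :=
    LinearIndependent.of_comp (C.map f).subtype images_li
  simpa using this.fintype_card_le_finrank

theorem finrank_ker_inf_add_finrank_map (f : V →ₗ[𝕜] W) (C : Submodule 𝕜 V)
    [FiniteDimensional 𝕜 C] :
    Module.finrank 𝕜 ↥(LinearMap.ker f ⊓ C) + Module.finrank 𝕜 (C.map f)
      = Module.finrank 𝕜 C := by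
  have h := (f.domRestrict C).finrank_range_add_finrank_ker
  rw [LinearMap.range_domRestrict, LinearMap.ker_domRestrict] at h
  have : Module.finrank 𝕜 ((LinearMap.ker f).comap C.subtype)
      = Module.finrank 𝕜 ↥(LinearMap.ker f ⊓ C) := by
    rw [inf_comm, ← Submodule.map_comap_subtype]
    exact (LinearEquiv.finrank_eq (Submodule.equivMapOfInjective C.subtype
      C.subtype_injective _))
  omega

end Minors

section PolynomialFamily

variable {𝕜 τ V W W' : Type*} [Field 𝕜] [AddCommGroup V] [Module 𝕜 V] [AddCommGroup W]
  [Module 𝕜 W] [AddCommGroup W'] [Module 𝕜 W']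

variable (𝕜) in
/-- `f` depends polynomially on the parameters `t`, tested after every linear functional. -/
def IsPolynomialFamily (f : (τ → 𝕜) → W) : Prop :=
  ∀ φ : W →ₗ[𝕜] 𝕜, ∃ Q : MvPolynomial τ 𝕜, ∀ t, eval t Q = φ (f t)

namespace IsPolynomialFamily

theorem const (w : W) : IsPolynomialFamily 𝕜 (fun _ : τ → 𝕜 => w) :=
  fun φ => ⟨C (φ w), fun _ => eval_C _⟩

theorem add {f g : (τ → 𝕜) → W} (hf : IsPolynomialFamily 𝕜 f) (hg : IsPolynomialFamily 𝕜 g) :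
    IsPolynomialFamily 𝕜 (fun t => f t + g t) := fun φ => by
  obtain ⟨P, hP⟩ := hf φ
  obtain ⟨Q, hQ⟩ := hg φ
  exact ⟨P + Q, fun t => by rw [map_add, map_add, hP, hQ]⟩

theorem coord_smul {f : (τ → 𝕜) → W} (hf : IsPolynomialFamily 𝕜 f) (p : τ) :
    IsPolynomialFamily 𝕜 (fun t => t p • f t) := fun φ => by
  obtain ⟨Q, hQ⟩ := hf φ
  exact ⟨X p * Q, fun t => by rw [map_mul, eval_X, hQ, map_smul, smul_eq_mul]⟩

theorem map {f : (τ → 𝕜) → W} (hf : IsPolynomialFamily 𝕜 f) (ψ : W →ₗ[𝕜] W') :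
    IsPolynomialFamily 𝕜 (fun t => ψ (f t)) := fun φ => hf (φ.comp ψ)

theorem sum {α : Type*} {f : α → (τ → 𝕜) → W} (s : Finset α)
    (hf : ∀ a ∈ s, IsPolynomialFamily 𝕜 (f a)) :
    IsPolynomialFamily 𝕜 (fun t => ∑ a ∈ s, f a t) := by
  classical
  induction s using Finset.induction_on with
  | empty => simpa using const (0 : W)
  | insert a s ha ih =>
    simp only [Finset.sum_insert ha]
    exact (hf a (Finset.mem_insert_self a s)).add
      (ih fun b hb => hf b (Finset.mem_insert_of_mem hb))

theorem exists_finrank_map_le {f : (τ → 𝕜) → V →ₗ[𝕜] W}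
    (hf : ∀ x, IsPolynomialFamily 𝕜 (fun t => f t x)) (C : Submodule 𝕜 V)
    [FiniteDimensional 𝕜 C] (t₀ : τ → 𝕜) :
    ∃ F : MvPolynomial τ 𝕜, eval t₀ F ≠ 0 ∧ ∀ t, eval t F ≠ 0 →
      Module.finrank 𝕜 (C.map (f t₀)) ≤ Module.finrank 𝕜 (C.map (f t)) := by
  have : FiniteDimensional 𝕜 (Submodule.span 𝕜 (C : Set V)) := by rwa [Submodule.span_eq]
  let b := Module.Free.chooseBasis 𝕜 W
  obtain ⟨x, hx, k, hdet⟩ := exists_minor_ne_zero_of_span (f t₀) (C : Set V) b rfl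
  choose Q hQ using fun m l => hf (x l) (b.coord (k m))
  have eval_det : ∀ t, eval t (Matrix.of Q).det
      = (Matrix.of fun m l => b.coord (k m) (f t (x l))).det := fun t => by
    rw [RingHom.map_det]
    congr 1
    ext m l
    exact hQ m l t
  refine ⟨(Matrix.of Q).det, by rw [eval_det]; exact hdet, fun t ht => ?_⟩
  rw [eval_det] at ht
  have := le_finrank_map_of_det_ne_zero (f t) hx (fun m => b.coord (k m)) ht
  rwa [Submodule.span_eq] at this

end IsPolynomialFamily

end PolynomialFamily

section GradedMaps

variable {𝕜 A A' A'' : Type*} [Field 𝕜] [AddCommGroup A] [Module 𝕜 A]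
  [AddCommGroup A'] [Module 𝕜 A']
  [AddCommGroup A''] [Module 𝕜 A'']

/-- `f` is homogeneous of degree `0` for the gradings `G` and `G'`. -/
def IsGradedMap (G : ℤ → Submodule 𝕜 A) (G' : ℤ → Submodule 𝕜 A') (f : A →ₗ[𝕜] A') : Prop :=
  ∀ ⦃d : ℤ⦄ ⦃x : A⦄, x ∈ G d → f x ∈ G' d

namespace IsGradedMap

variable {G : ℤ → Submodule 𝕜 A} {G' : ℤ → Submodule 𝕜 A'} {G'' : ℤ → Submodule 𝕜 A''}

theorem id : IsGradedMap G G LinearMap.id := fun _ _ hx => hx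

theorem comp {f' : A' →ₗ[𝕜] A''} {f : A →ₗ[𝕜] A'} (hf' : IsGradedMap G' G'' f')
    (hf : IsGradedMap G G' f) : IsGradedMap G G'' (f' ∘ₗ f) := fun _ _ hx => hf' (hf hx)

theorem sub {f g : A →ₗ[𝕜] A'} (hf : IsGradedMap G G' f) (hg : IsGradedMap G G' g) :
    IsGradedMap G G' (f - g) := fun _ _ hx => Submodule.sub_mem _ (hf hx) (hg hx)

end IsGradedMap

end GradedMaps

section TensorGrade

variable {K} {A A' B B' C : Type} [AddCommGroup A] [Module K A] [AddCommGroup A'] [Module K A']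
  [AddCommGroup B] [Module K B] [AddCommGroup B'] [Module K B'] [AddCommGroup C] [Module K C]
  {GA : ℤ → Submodule K A} {GA' : ℤ → Submodule K A'} {GB : ℤ → Submodule K B}
  {GB' : ℤ → Submodule K B'} {GC : ℤ → Submodule K C}

theorem tmul_mem_tensorGrade {p q d : ℤ} (hd : p + q = d) {a : A} {b : B} (ha : a ∈ GA p)
    (hb : b ∈ GB q) : a ⊗ₜ[K] b ∈ tensorGrade K GA GB d := by
  obtain rfl : q = d - p := by omega
  exact Submodule.mem_iSup_of_mem p ⟨⟨a, ha⟩ ⊗ₜ ⟨b, hb⟩, rfl⟩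

theorem tensorGrade_le {d : ℤ} {W : Submodule K (A ⊗[K] B)}
    (h : ∀ p q, p + q = d → ∀ a ∈ GA p, ∀ b ∈ GB q, a ⊗ₜ[K] b ∈ W) :
    tensorGrade K GA GB d ≤ W := by
  refine iSup_le fun p => ?_
  rw [TensorProduct.range_map_eq_span_tmul, Submodule.span_le]
  rintro _ ⟨⟨a, ha⟩, ⟨b, hb⟩, rfl⟩
  exact h p (d - p) (by omega) a ha b hb

theorem map_congr_tensorGrade {e : A ≃ₗ[K] A'} {f : B ≃ₗ[K] B'}
    (he : ∀ d, (GA d).map (e : A →ₗ[K] A') = GA' d)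
    (hf : ∀ d, (GB d).map (f : B →ₗ[K] B') = GB' d) (d : ℤ) :
    (tensorGrade K GA GB d).map (TensorProduct.congr e f : A ⊗[K] B →ₗ[K] A' ⊗[K] B') =
      tensorGrade K GA' GB' d := by
  refine le_antisymm (Submodule.map_le_iff_le_comap.mpr
    (tensorGrade_le fun p q hpq a ha b hb => ?_)) (tensorGrade_le fun p q hpq a' ha' b' hb' => ?_)
  · exact tmul_mem_tensorGrade hpq (he p ▸ Submodule.mem_map_of_mem ha)
      (hf q ▸ Submodule.mem_map_of_mem hb)
  · rw [← he] at ha'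
    rw [← hf] at hb'
    obtain ⟨a, ha, rfl⟩ := ha'
    obtain ⟨b, hb, rfl⟩ := hb'
    exact ⟨a ⊗ₜ b, tmul_mem_tensorGrade hpq ha hb, rfl⟩

namespace IsGradedMap

theorem of_tmul {f : A ⊗[K] B →ₗ[K] C}
    (h : ∀ p q, ∀ a ∈ GA p, ∀ b ∈ GB q, f (a ⊗ₜ b) ∈ GC (p + q)) :
    IsGradedMap (tensorGrade K GA GB) GC f := fun d _ hz =>
  tensorGrade_le (W := (GC d).comap f)
    (fun p q hpq a ha b hb => by subst hpq; exact h p q a ha b hb) hz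

theorem tensorMap {f : A →ₗ[K] A'} {g : B →ₗ[K] B'} (hf : IsGradedMap GA GA' f)
    (hg : IsGradedMap GB GB' g) :
    IsGradedMap (tensorGrade K GA GB) (tensorGrade K GA' GB') (TensorProduct.map f g) :=
  of_tmul fun _ _ _ ha _ hb => tmul_mem_tensorGrade rfl (hf ha) (hg hb)

theorem assoc_symm : IsGradedMap (tensorGrade K GA (tensorGrade K GB GC))
    (tensorGrade K (tensorGrade K GA GB) GC)
    (TensorProduct.assoc K A B C).symm.toLinearMap :=
  of_tmul fun p q a ha z hz => by
    refine tensorGrade_le (W := (tensorGrade K (tensorGrade K GA GB) GC (p + q)).comap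
      ((TensorProduct.assoc K A B C).symm.toLinearMap ∘ₗ TensorProduct.mk K A (B ⊗[K] C) a))
      (fun r s hrs b hb c hc => ?_) hz
    exact tmul_mem_tensorGrade (by omega) (tmul_mem_tensorGrade rfl ha hb) hc

end IsGradedMap

end TensorGrade

section HomogeneousBasis

/-- The basis `b` consists of homogeneous vectors, `b i` of degree `deg i`, for the grading `G`,
which is non-negative with finite-dimensional pieces. -/
structure IsHomogeneousBasis {𝕜 A ι : Type*} [Field 𝕜] [AddCommGroup A] [Module 𝕜 A]
    (b : Module.Basis ι 𝕜 A) (deg : ι → ℤ) (G : ℤ → Submodule 𝕜 A) : Prop where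
  nonneg : ∀ i, 0 ≤ deg i
  finite_fiber : ∀ d, {i | deg i = d}.Finite
  eq_span : ∀ d, G d = Submodule.span 𝕜 (b '' {i | deg i = d})

namespace IsHomogeneousBasis

section

variable {𝕜 A A' ι ι' : Type*} [Field 𝕜] [AddCommGroup A] [Module 𝕜 A] [AddCommGroup A']
  [Module 𝕜 A'] {b : Module.Basis ι 𝕜 A} {deg : ι → ℤ} {G : ℤ → Submodule 𝕜 A}
  {b' : Module.Basis ι' 𝕜 A'} {deg' : ι' → ℤ} {G' : ℤ → Submodule 𝕜 A'}

theorem mem (h : IsHomogeneousBasis b deg G) (i : ι) : b i ∈ G (deg i) := by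
  rw [h.eq_span]
  exact Submodule.subset_span ⟨i, rfl, rfl⟩

theorem finiteDimensional (h : IsHomogeneousBasis b deg G) (d : ℤ) :
    FiniteDimensional 𝕜 (G d) := by
  rw [h.eq_span]
  exact FiniteDimensional.span_of_finite 𝕜 ((h.finite_fiber d).image _)

theorem finrank_eq (h : IsHomogeneousBasis b deg G) (d : ℤ) :
    Module.finrank 𝕜 (G d) = Nat.card {i | deg i = d} := by
  have : LinearIndependent 𝕜 (fun i : {i | deg i = d} => b i) :=
    b.linearIndependent.comp _ Subtype.val_injective
  rw [h.eq_span, Set.image_eq_range]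
  exact Module.finrank_eq_nat_card_basis (Module.Basis.span this)

theorem exists_minor_ne_zero {V κ : Type*} [AddCommGroup V] [Module 𝕜 V]
    (h : IsHomogeneousBasis b deg G) (f : A →ₗ[𝕜] V) (b' : Module.Basis κ 𝕜 V) (d : ℤ) :
    ∃ p : Fin (Module.finrank 𝕜 ((G d).map f)) → ι, (∀ l, deg (p l) = d) ∧
      ∃ k : Fin (Module.finrank 𝕜 ((G d).map f)) → κ,
        (Matrix.of fun m l => b'.repr (f (b (p l))) (k m)).det ≠ 0 := by
  have := h.finiteDimensional d
  rw [h.eq_span] at this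
  obtain ⟨x, hx, k, hdet⟩ := exists_minor_ne_zero_of_span f (b '' {i | deg i = d}) b'
    (congrArg (fun W => Module.finrank 𝕜 (W.map f)) (h.eq_span d)).symm
  choose p hp hpx using hx
  exact ⟨p, hp, k, by simpa only [hpx] using hdet⟩

theorem map_linearEquiv (h : IsHomogeneousBasis b deg G) {e : A ≃ₗ[𝕜] A'}
    (he : ∀ d, (G d).map (e : A →ₗ[𝕜] A') = G' d) : IsHomogeneousBasis (b.map e) deg G' where
  nonneg := h.nonneg
  finite_fiber := h.finite_fiber
  eq_span d := by
    rw [← he, h.eq_span, Submodule.map_span, ← Set.image_comp]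
    rfl

open Classical in
/-- The projection onto the span of the basis vectors of degree `d`. -/
def proj (b : Module.Basis ι 𝕜 A) (deg : ι → ℤ) (d : ℤ) : A →ₗ[𝕜] A :=
  b.constr 𝕜 fun i => if deg i = d then b i else 0

theorem proj_of_mem (h : IsHomogeneousBasis b deg G) {d : ℤ} {x : A} (hx : x ∈ G d) :
    proj b deg d x = x := by
  rw [h.eq_span] at hx
  refine LinearMap.eqOn_span (g := LinearMap.id) ?_ hx
  rintro _ ⟨i, hi, rfl⟩
  exact (b.constr_basis 𝕜 _ i).trans (if_pos hi)

theorem proj_of_mem_of_ne (h : IsHomogeneousBasis b deg G) {d e : ℤ} (hne : e ≠ d) {x : A}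
    (hx : x ∈ G e) : proj b deg d x = 0 := by
  rw [h.eq_span] at hx
  refine LinearMap.eqOn_span (g := 0) ?_ hx
  rintro _ ⟨i, hi, rfl⟩
  exact (b.constr_basis 𝕜 _ i).trans (if_neg fun hd => hne (hi.symm.trans hd))

theorem proj_mem (h : IsHomogeneousBasis b deg G) (d : ℤ) (x : A) : proj b deg d x ∈ G d := by
  have hx : proj b deg d x ∈ LinearMap.range (proj b deg d) := ⟨x, rfl⟩
  rw [proj, b.constr_range] at hx
  refine Submodule.span_le.mpr ?_ hx
  rintro _ ⟨i, rfl⟩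
  dsimp only
  split_ifs with hd
  · exact hd ▸ h.mem i
  · exact Submodule.zero_mem _

theorem proj_comp_eq_comp_proj (h : IsHomogeneousBasis b deg G)
    (h' : IsHomogeneousBasis b' deg' G') {f : A →ₗ[𝕜] A'} (hf : IsGradedMap G G' f) (d : ℤ) :
    proj b' deg' d ∘ₗ f = f ∘ₗ proj b deg d := by
  refine b.ext fun i => ?_
  rw [LinearMap.comp_apply, LinearMap.comp_apply]
  by_cases hd : deg i = d
  · have hi := h.mem i
    rw [hd] at hi
    rw [h.proj_of_mem hi, h'.proj_of_mem (hf hi)]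
  · rw [h.proj_of_mem_of_ne hd (h.mem i), h'.proj_of_mem_of_ne hd (hf (h.mem i)), map_zero]

theorem range_inf_eq_map (h : IsHomogeneousBasis b deg G) (h' : IsHomogeneousBasis b' deg' G')
    {f : A →ₗ[𝕜] A'} (hf : IsGradedMap G G' f) (d : ℤ) :
    LinearMap.range f ⊓ G' d = (G d).map f := by
  refine le_antisymm ?_ ?_
  · rintro _ ⟨⟨y, rfl⟩, hy⟩
    refine ⟨proj b deg d y, h.proj_mem d y, ?_⟩
    rw [← LinearMap.comp_apply, ← h.proj_comp_eq_comp_proj h' hf, LinearMap.comp_apply,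
      h'.proj_of_mem hy]
  · rintro _ ⟨y, hy, rfl⟩
    exact ⟨⟨y, rfl⟩, hf hy⟩

end

variable {K} in
theorem tensor {A A' ι ι' : Type} [AddCommGroup A] [Module K A] [AddCommGroup A']
    [Module K A'] {b : Module.Basis ι K A} {deg : ι → ℤ} {G : ℤ → Submodule K A}
    {b' : Module.Basis ι' K A'} {deg' : ι' → ℤ} {G' : ℤ → Submodule K A'}
    (h : IsHomogeneousBasis b deg G) (h' : IsHomogeneousBasis b' deg' G') :
    IsHomogeneousBasis (b.tensorProduct b') (fun p => deg p.1 + deg' p.2)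
      (tensorGrade K G G') where
  nonneg p := add_nonneg (h.nonneg _) (h'.nonneg _)
  finite_fiber d := by
    refine Set.Finite.subset (s := ⋃ p ∈ Set.Icc (0 : ℤ) d,
      {i | deg i = p} ×ˢ {i | deg' i = d - p})
      ((Set.finite_Icc _ _).biUnion fun p _ => (h.finite_fiber p).prod (h'.finite_fiber _)) ?_
    rintro ⟨i, i'⟩ (hi : deg i + deg' i' = d)
    have := h.nonneg i
    have := h'.nonneg i'
    simp only [Set.mem_iUnion, Set.mem_prod, Set.mem_ofPred_eq, Set.mem_Icc]
    exact ⟨deg i, ⟨by omega, by omega⟩, rfl, by omega⟩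
  eq_span d := by
    refine le_antisymm (tensorGrade_le fun p q hpq x hx y hy => ?_) ?_
    · rw [h.eq_span] at hx
      rw [h'.eq_span] at hy
      have := Submodule.apply_mem_map₂ (TensorProduct.mk K A A') hx hy
      rw [Submodule.map₂_span_span] at this
      refine Submodule.span_mono ?_ this
      rintro _ ⟨_, ⟨i, rfl, rfl⟩, _, ⟨i', rfl, rfl⟩, rfl⟩
      exact ⟨(i, i'), hpq, b.tensorProduct_apply b' i i'⟩
    · rw [Submodule.span_le]
      rintro _ ⟨⟨i, i'⟩, hi, rfl⟩
      rw [b.tensorProduct_apply b' i i']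
      exact tmul_mem_tensorGrade hi (h.mem i) (h'.mem i')

end IsHomogeneousBasis

end HomogeneousBasis

section BarDifferential

variable {R A Y M : Type*} [CommRing R] [Ring A] [Algebra R A] [AddCommGroup Y] [Module R Y]
  [AddCommGroup M] [Module R M]

/-- The bar differential `m ⊗ s ⊗ y ↦ μ(m ⊗ s) ⊗ y - m ⊗ c(s ⊗ y)` of an action `μ` of `A` on `M`
and a differential `c` on the remaining tensor factors. -/
def barDiff (μ : M ⊗[R] A →ₗ[R] M) (c : A ⊗[R] Y →ₗ[R] Y) :
    M ⊗[R] (A ⊗[R] Y) →ₗ[R] M ⊗[R] Y :=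
  (TensorProduct.map μ LinearMap.id).comp (TensorProduct.assoc R M A Y).symm.toLinearMap
    - TensorProduct.map LinearMap.id c

@[simp]
theorem barDiff_tmul (μ : M ⊗[R] A →ₗ[R] M) (c : A ⊗[R] Y →ₗ[R] Y) (m : M) (s : A) (y : Y) :
    barDiff μ c (m ⊗ₜ (s ⊗ₜ y)) = μ (m ⊗ₜ s) ⊗ₜ[R] y - m ⊗ₜ c (s ⊗ₜ y) := rfl

theorem barDiff_comp_map {M' Y' : Type*} [AddCommGroup M'] [Module R M'] [AddCommGroup Y']
    [Module R Y'] {μ : M ⊗[R] A →ₗ[R] M} {c : A ⊗[R] Y →ₗ[R] Y} {μ' : M' ⊗[R] A →ₗ[R] M'}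
    {c' : A ⊗[R] Y' →ₗ[R] Y'} {f : M →ₗ[R] M'} {φ : A →ₗ[R] A} {g : Y →ₗ[R] Y'}
    (hμ : μ' ∘ₗ TensorProduct.map f φ = f ∘ₗ μ) (hc : c' ∘ₗ TensorProduct.map φ g = g ∘ₗ c) :
    barDiff μ' c' ∘ₗ TensorProduct.map f (TensorProduct.map φ g) =
      TensorProduct.map f g ∘ₗ barDiff μ c := by
  refine TensorProduct.ext_threefold' fun m s y => ?_
  have hms : μ' (f m ⊗ₜ φ s) = f (μ (m ⊗ₜ s)) := LinearMap.congr_fun hμ (m ⊗ₜ s)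
  have hsy : c' (φ s ⊗ₜ g y) = g (c (s ⊗ₜ y)) := LinearMap.congr_fun hc (s ⊗ₜ y)
  simp only [LinearMap.comp_apply, map_tmul, barDiff_tmul, map_sub, hms, hsy]

end BarDifferential

section Contraction

variable {R A Y M : Type*} [CommRing R] [Ring A] [Algebra R A] [AddCommGroup Y] [Module R Y]
  [AddCommGroup M] [Module R M] (ε : A →ₐ[R] R)

/-- The projection of an augmented algebra onto its augmentation ideal. -/
def augProj : A →ₗ[R] A := LinearMap.id - Algebra.linearMap R A ∘ₗ ε.toLinearMap

theorem augProj_apply (s : A) : augProj ε s = s - algebraMap R A (ε s) := rfl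

theorem augProj_one : augProj ε 1 = 0 := by
  rw [augProj_apply, map_one, map_one, sub_self]

theorem map_augProj (s : A) : ε (augProj ε s) = 0 := by
  rw [augProj_apply, map_sub, AlgHom.commutes, Algebra.algebraMap_self_apply, sub_self]

variable {ε}

theorem augProj_of_map_eq_zero {s : A} (hs : ε s = 0) : augProj ε s = s := by
  rw [augProj_apply, hs, map_zero, sub_zero]

theorem tensor_ext_of_augmentation {W : Type*} [AddCommGroup W] [Module R W]
    {f g : A ⊗[R] Y →ₗ[R] W} (h_one : ∀ y, f (1 ⊗ₜ y) = g (1 ⊗ₜ y))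
    (h_aug : ∀ s y, ε s = 0 → f (s ⊗ₜ y) = g (s ⊗ₜ y)) : f = g := by
  refine TensorProduct.ext' fun s y => ?_
  have hs : s = augProj ε s + ε s • (1 : A) := by
    rw [augProj_apply, Algebra.algebraMap_eq_smul_one, sub_add_cancel]
  rw [hs, add_tmul, map_add, map_add, h_aug _ _ (map_augProj ε s), ← smul_tmul', map_smul,
    map_smul, h_one]

variable (ε) in
/-- One step in the recursive construction of a contracting homotopy of the normalized bar complex:
`1 ⊗ y ↦ 1 ⊗ 1 ⊗ y`, and `s ⊗ y ↦ -s ⊗ H y` on the augmentation ideal. -/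
def nextHomotopy (H : Y →ₗ[R] A ⊗[R] Y) : A ⊗[R] Y →ₗ[R] A ⊗[R] (A ⊗[R] Y) :=
  TensorProduct.lift (ε.toLinearMap.smulRight
    (TensorProduct.mk R A (A ⊗[R] Y) 1 ∘ₗ TensorProduct.mk R A Y 1))
    - TensorProduct.map (augProj ε) H

theorem nextHomotopy_tmul (H : Y →ₗ[R] A ⊗[R] Y) (s : A) (y : Y) :
    nextHomotopy ε H (s ⊗ₜ y) = ε s • (1 ⊗ₜ (1 ⊗ₜ y)) - augProj ε s ⊗ₜ H y := rfl

theorem nextHomotopy_one_tmul (H : Y →ₗ[R] A ⊗[R] Y) (y : Y) :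
    nextHomotopy ε H (1 ⊗ₜ y) = 1 ⊗ₜ (1 ⊗ₜ y) := by
  rw [nextHomotopy_tmul, map_one, augProj_one, one_smul, zero_tmul, sub_zero]

theorem nextHomotopy_tmul_of_map_eq_zero (H : Y →ₗ[R] A ⊗[R] Y) {s : A} (hs : ε s = 0) (y : Y) :
    nextHomotopy ε H (s ⊗ₜ y) = -(s ⊗ₜ H y) := by
  rw [nextHomotopy_tmul, hs, augProj_of_map_eq_zero hs, zero_smul, zero_sub]

variable (ε) in
/-- `H` contracts `c` up to the normalization `P`: the two identities propagate from each term of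
the bar complex to the next. -/
structure IsContraction (c : A ⊗[R] Y →ₗ[R] Y) (H : Y →ₗ[R] A ⊗[R] Y) (P : Y →ₗ[R] Y) :
    Prop where
  tmul_of_map_eq_zero : ∀ (s : A) (y : Y), ε s = 0 →
    barDiff (LinearMap.mul' R A) c (s ⊗ₜ H y) - H (c (s ⊗ₜ y)) = s ⊗ₜ[R] (y - P y)
  one_tmul : ∀ y : Y, 1 ⊗ₜ[R] c (1 ⊗ₜ y) + H (y - c (1 ⊗ₜ y)) = 1 ⊗ₜ y

namespace IsContraction

variable {c : A ⊗[R] Y →ₗ[R] Y} {H : Y →ₗ[R] A ⊗[R] Y} {P : Y →ₗ[R] Y}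

theorem of_one_tmul (hc : ∀ y, c (1 ⊗ₜ y) = y) :
    IsContraction ε c 0 LinearMap.id where
  tmul_of_map_eq_zero s y _ := by simp
  one_tmul y := by simp [hc]

theorem homotopy_tmul (h : IsContraction ε c H P) {μ : M ⊗[R] A →ₗ[R] M}
    (hμ : ∀ m, μ (m ⊗ₜ 1) = m) (m : M) (x : A ⊗[R] Y) :
    barDiff μ (barDiff (LinearMap.mul' R A) c) (m ⊗ₜ nextHomotopy ε H x) +
      TensorProduct.map LinearMap.id H (barDiff μ c (m ⊗ₜ x)) =
      m ⊗ₜ[R] (x - TensorProduct.map (augProj ε) P x) := by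
  have key : (barDiff μ (barDiff (LinearMap.mul' R A) c)).comp
        ((TensorProduct.mk R M _ m).comp (nextHomotopy ε H)) +
      (TensorProduct.map LinearMap.id H).comp ((barDiff μ c).comp (TensorProduct.mk R M _ m)) =
      (TensorProduct.mk R M _ m).comp (LinearMap.id - TensorProduct.map (augProj ε) P) := by
    refine tensor_ext_of_augmentation (ε := ε) (fun y => ?_) (fun s y hs => ?_)
    · simp only [LinearMap.add_apply, LinearMap.comp_apply, mk_apply, LinearMap.sub_apply,
        LinearMap.id_apply, map_tmul, augProj_one, zero_tmul, sub_zero, nextHomotopy_one_tmul,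
        barDiff_tmul, hμ, LinearMap.mul'_apply, one_mul, map_sub, tmul_sub]
      have h_one := congrArg (TensorProduct.mk R M _ m) (h.one_tmul y)
      simp only [mk_apply, map_sub, map_add] at h_one
      rw [← h_one]
      abel
    · simp only [LinearMap.add_apply, LinearMap.comp_apply, mk_apply, LinearMap.sub_apply,
        LinearMap.id_apply, map_tmul, augProj_of_map_eq_zero hs,
        nextHomotopy_tmul_of_map_eq_zero H hs, map_neg, barDiff_tmul, map_sub]
      have h_aug := congrArg (TensorProduct.mk R M _ m) (h.tmul_of_map_eq_zero s y hs)
      simp only [mk_apply, tmul_sub] at h_aug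
      rw [← h_aug]
      abel
  exact LinearMap.congr_fun key x

theorem next (h : IsContraction ε c H P) :
    IsContraction ε (barDiff (LinearMap.mul' R A) c) (nextHomotopy ε H)
      (TensorProduct.map (augProj ε) P) where
  tmul_of_map_eq_zero s x hs := by
    rw [← h.homotopy_tmul (μ := LinearMap.mul' R A) (fun m => by simp) s x, sub_eq_add_neg]
    congr 1
    induction x using TensorProduct.induction_on with
    | zero => simp
    | tmul t y =>
      rw [barDiff_tmul, LinearMap.mul'_apply, map_sub, map_sub, map_tmul, map_tmul,
        nextHomotopy_tmul_of_map_eq_zero H hs,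
        nextHomotopy_tmul_of_map_eq_zero H (by rw [map_mul, hs, zero_mul])]
      rw [LinearMap.id_apply]
      abel
    | add x y hx hy => simp only [tmul_add, map_add, neg_add, hx, hy]
  one_tmul x := by
    have h_one : barDiff (LinearMap.mul' R A) c (1 ⊗ₜ x) = x - 1 ⊗ₜ c x := by
      induction x using TensorProduct.induction_on with
      | zero => simp
      | tmul t y => rw [barDiff_tmul, LinearMap.mul'_apply, one_mul]
      | add x y hx hy => rw [tmul_add, map_add, hx, hy, map_add, tmul_add, add_sub_add_comm]
    rw [h_one, sub_sub_cancel, nextHomotopy_one_tmul, tmul_sub, sub_add_cancel]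

theorem homotopy (h : IsContraction ε c H P) {μ : M ⊗[R] A →ₗ[R] M}
    (hμ : ∀ m, μ (m ⊗ₜ 1) = m) (z : M ⊗[R] (A ⊗[R] Y)) :
    barDiff μ (barDiff (LinearMap.mul' R A) c)
        (TensorProduct.map LinearMap.id (nextHomotopy ε H) z) +
      TensorProduct.map LinearMap.id H (barDiff μ c z) =
      z - TensorProduct.map LinearMap.id (TensorProduct.map (augProj ε) P) z := by
  induction z using TensorProduct.induction_on with
  | zero => simp only [map_zero, add_zero, sub_zero]
  | tmul m x => exact (h.homotopy_tmul hμ m x).trans (tmul_sub _ _ _)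
  | add x y hx hy =>
    simp only [map_add]
    rw [add_sub_add_comm, ← hx, ← hy]
    abel

end IsContraction

end Contraction

section LinearSubstitution

variable {R τ : Type*} [CommRing R] [Fintype τ]

/-- The substitution `x_i ↦ ∑ j, A j i • x_j`. It is defined for singular `A` too, so that it is
polynomial in the entries of `A`. -/
def linearSubst (A : Matrix τ τ R) : MvPolynomial τ R →ₐ[R] MvPolynomial τ R :=
  aeval fun i => ∑ j, A j i • X j

theorem linearSubst_X (A : Matrix τ τ R) (i : τ) : linearSubst A (X i) = ∑ j, A j i • X j :=
  aeval_X _ i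

theorem linearSubst_comp (A A' : Matrix τ τ R) :
    (linearSubst A).comp (linearSubst A') = linearSubst (A * A') := by
  refine algHom_ext fun i => ?_
  simp only [AlgHom.comp_apply, linearSubst_X, map_sum, map_smul, Matrix.mul_apply,
    Finset.sum_smul, Finset.smul_sum, smul_smul]
  rw [Finset.sum_comm]
  exact Finset.sum_congr rfl fun j _ => Finset.sum_congr rfl fun k _ => by rw [mul_comm]

theorem linearSubst_one [DecidableEq τ] : linearSubst (1 : Matrix τ τ R) = AlgHom.id R _ :=
  algHom_ext fun i => by simp [linearSubst_X, Matrix.one_apply]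

theorem linearSubst_diagonal_monomial [DecidableEq τ] (T : τ → R) (a : τ →₀ ℕ) (c : R) :
    linearSubst (Matrix.diagonal T) (monomial a c) = eval T (monomial a 1) • monomial a c := by
  have hX : ∀ i, linearSubst (Matrix.diagonal T) (X i) = C (T i) * X i := fun i => by
    simp [linearSubst_X, Matrix.diagonal_apply, C_mul']
  rw [eval_monomial, one_mul, monomial_eq, map_mul, ← algebraMap_eq, AlgHom.commutes,
    Finsupp.prod, Finsupp.prod, map_prod, smul_eq_C_mul, map_prod, mul_left_comm,
    ← Finset.prod_mul_distrib]
  simp only [map_pow, hX, mul_pow]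

theorem isHomogeneous_linearSubst {s : MvPolynomial τ R} {d : ℕ} (hs : s.IsHomogeneous d)
    (A : Matrix τ τ R) : (linearSubst A s).IsHomogeneous d := by
  have hX : ∀ i, (∑ j, A j i • (X j : MvPolynomial τ R)).IsHomogeneous 1 := fun i =>
    IsHomogeneous.sum _ _ _ fun j _ => by
      rw [smul_eq_C_mul]
      exact (isHomogeneous_X R j).C_mul (A j i)
  have := hs.aeval _ hX
  rwa [one_mul] at this

/-- An invertible change of coordinates as an automorphism of the polynomial ring. -/
def linearSubstEquiv [DecidableEq τ] (g : GL τ R) : MvPolynomial τ R ≃ₐ[R] MvPolynomial τ R :=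
  AlgEquiv.ofAlgHom (linearSubst g.val) (linearSubst g⁻¹.val)
    (by rw [linearSubst_comp, ← Units.val_mul, mul_inv_cancel, Units.val_one, linearSubst_one])
    (by rw [linearSubst_comp, ← Units.val_mul, inv_mul_cancel, Units.val_one, linearSubst_one])

end LinearSubstitution

section PolynomialGrading

variable {K n}

theorem mul_mem_polyGrade {p q : ℤ} {s t : PS K n} (hs : s ∈ polyGrade K n p)
    (ht : t ∈ polyGrade K n q) : s * t ∈ polyGrade K n (p + q) := by
  unfold polyGrade at *
  split_ifs at hs ht with hp hq
  · rw [if_pos (add_nonneg hp hq), Int.toNat_add hp hq]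
    exact IsHomogeneous.mul hs ht
  · rw [(Submodule.mem_bot K).mp ht, mul_zero]
    exact Submodule.zero_mem _
  all_goals
    rw [(Submodule.mem_bot K).mp hs, zero_mul]
    exact Submodule.zero_mem _

theorem linearSubst_mem_polyGrade (A : Matrix (Fin n) (Fin n) K) :
    IsGradedMap (polyGrade K n) (polyGrade K n) (linearSubst A).toLinearMap := fun d s hs => by
  unfold polyGrade at *
  split_ifs at hs ⊢
  · exact isHomogeneous_linearSubst hs A
  · rw [(Submodule.mem_bot K).mp hs, map_zero]
    exact Submodule.zero_mem _

theorem smul_mem_quotGrade (I : Ideal (PS K n)) {p q : ℤ} {s : PS K n} {x : PS K n ⧸ I}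
    (hs : s ∈ polyGrade K n p) (hx : x ∈ quotGrade K n I q) :
    s • x ∈ quotGrade K n I (p + q) := by
  obtain ⟨f, hf, rfl⟩ := hx
  exact ⟨s * f, mul_mem_polyGrade hs hf, rfl⟩

theorem augProj_eq_zero_of_mem_polyGrade {p : ℤ} (hp : p ≤ 0) {s : PS K n}
    (hs : s ∈ polyGrade K n p) : augProj (aeval (0 : Fin n → K)) s = 0 := by
  unfold polyGrade at hs
  split_ifs at hs with hp'
  · obtain rfl : p = 0 := le_antisymm hp hp'
    have hs : IsHomogeneous s 0 := hs
    rw [← totalDegree_zero_iff_isHomogeneous, totalDegree_eq_zero_iff_eq_C] at hs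
    rw [augProj_apply, hs, aeval_C, Algebra.algebraMap_self_apply, algebraMap_eq, sub_self]
  · rw [(Submodule.mem_bot K).mp hs, map_zero]

end PolynomialGrading

section TwistedBar

variable {K n}

/-- The action of `S` on `M` twisted by the substitution `A`, `m ⊗ s ↦ A(s) • m`. -/
def twistedSMul (A : Matrix (Fin n) (Fin n) K) : M ⊗[K] PS K n →ₗ[K] M :=
  smulMapM K n M ∘ₗ TensorProduct.map LinearMap.id (linearSubst A).toLinearMap

variable {M}

theorem isPolynomialFamily_linearSubst_smul (s : PS K n) (m : M) :
    IsPolynomialFamily K fun t : Fin n × Fin n → K =>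
      linearSubst (Matrix.of (Function.curry t)) s • m := by
  induction s using MvPolynomial.induction_on with
  | C a =>
    convert IsPolynomialFamily.const (a • m) using 2
    rw [← algebraMap_eq, AlgHom.commutes, algebraMap_smul]
  | add p q hp hq =>
    convert hp.add hq using 2
    rw [map_add, add_smul]
  | mul_X p i hp =>
    convert IsPolynomialFamily.sum Finset.univ
      fun j _ => (hp.map (smulBilin K n M (X j))).coord_smul (j, i) using 2 with t
    rw [map_mul, linearSubst_X, Finset.mul_sum, Finset.sum_smul]
    refine Finset.sum_congr rfl fun j _ => ?_
    rw [mul_smul_comm, smul_assoc, mul_comm, mul_smul]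
    rfl

theorem isPolynomialFamily_barDiff_twistedSMul {Y : Type*} [AddCommGroup Y] [Module K Y]
    (c : PS K n ⊗[K] Y →ₗ[K] Y) (z : M ⊗[K] (PS K n ⊗[K] Y)) :
    IsPolynomialFamily K fun t : Fin n × Fin n → K =>
      barDiff (twistedSMul M (Matrix.of (Function.curry t))) c z := by
  induction z using TensorProduct.induction_on with
  | zero => simpa only [map_zero] using IsPolynomialFamily.const _
  | add x y hx hy => simpa only [map_add] using hx.add hy
  | tmul m z =>
    induction z using TensorProduct.induction_on with
    | zero => simpa only [tmul_zero, map_zero] using IsPolynomialFamily.const _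
    | add x y hx hy => simpa only [tmul_add, map_add] using hx.add hy
    | tmul s y =>
      simp only [barDiff_tmul, sub_eq_add_neg]
      exact ((isPolynomialFamily_linearSubst_smul s m).map ((TensorProduct.mk K M Y).flip y)).add
        (.const _)

end TwistedBar

section BarGrading

variable {K n} {N M}

theorem IsGradedMap.barDiff {V A Y : Type} [AddCommGroup V] [Module K V] [Ring A] [Algebra K A]
    [AddCommGroup Y] [Module K Y] {GV : ℤ → Submodule K V} {GA : ℤ → Submodule K A}
    {GY : ℤ → Submodule K Y} {μ : V ⊗[K] A →ₗ[K] V} {c : A ⊗[K] Y →ₗ[K] Y}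
    (hμ : IsGradedMap (tensorGrade K GV GA) GV μ) (hc : IsGradedMap (tensorGrade K GA GY) GY c) :
    IsGradedMap (tensorGrade K GV (tensorGrade K GA GY)) (tensorGrade K GV GY)
      (barDiff μ c) :=
  ((hμ.tensorMap .id).comp .assoc_symm).sub (IsGradedMap.id.tensorMap hc)

theorem isGradedMap_smulMapM_quotGrade (I : Ideal (PS K n)) :
    IsGradedMap (tensorGrade K (quotGrade K n I) (polyGrade K n)) (quotGrade K n I)
      (smulMapM K n (PS K n ⧸ I)) :=
  .of_tmul fun p q x hx s hs => by
    rw [add_comm]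
    exact smul_mem_quotGrade I hs hx

theorem isGradedMap_barC_zero_quotGrade (J : Ideal (PS K n)) :
    IsGradedMap (barDGrade K n (PS K n ⧸ J) (quotGrade K n J) 1)
      (barDGrade K n (PS K n ⧸ J) (quotGrade K n J) 0) (barC K n (PS K n ⧸ J) 0) :=
  IsGradedMap.of_tmul fun _ _ _ hs _ hx => smul_mem_quotGrade J hs hx

theorem isGradedMap_barC {GN : ℤ → Submodule K N}
    (hN : IsGradedMap (barDGrade K n N GN 1) (barDGrade K n N GN 0) (barC K n N 0)) :
    ∀ i, IsGradedMap (barDGrade K n N GN (i + 1)) (barDGrade K n N GN i) (barC K n N i)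
  | 0 => hN
  | i + 1 => IsGradedMap.barDiff (IsGradedMap.of_tmul fun _ _ _ hs _ ht => mul_mem_polyGrade hs ht)
      (isGradedMap_barC hN i)

end BarGrading

section BarHomology

variable {K n} {N M}

/-- The degree `j` piece of the `i`-th term `M ⊗ S^{⊗ i} ⊗ N` of the bar complex. -/
abbrev barChain (GM : ℤ → Submodule K M) (GN : ℤ → Submodule K N) (i : ℕ) (j : ℤ) :
    Submodule K (M ⊗[K] barD K n N i) :=
  tensorGrade K GM (barDGrade K n N GN i) j

variable (n) in
theorem isHomogeneousBasis_monomial :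
    IsHomogeneousBasis (basisMonomials (Fin n) K) (fun a => ((Finsupp.degree a : ℕ) : ℤ))
      (polyGrade K n) where
  nonneg _ := Int.natCast_nonneg _
  finite_fiber d := by
    refine (Finset.finite_toSet (Finset.finsuppAntidiag Finset.univ d.toNat)).subset
      fun a ha => ?_
    rw [Set.mem_ofPred_eq] at ha
    rw [SetLike.mem_coe, Finset.mem_finsuppAntidiag, ← Finsupp.degree_eq_sum, ← ha]
    exact ⟨Int.toNat_natCast _, Finset.subset_univ _⟩
  eq_span d := by
    rw [coe_basisMonomials]
    unfold polyGrade
    split_ifs with hd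
    · have : {a : Fin n →₀ ℕ | ((Finsupp.degree a : ℕ) : ℤ) = d} =
          {a | Finsupp.degree a = d.toNat} := by
        ext a
        simp only [Set.mem_ofPred_eq]
        omega
      rw [homogeneousSubmodule_eq_finsupp_supported, AddMonoidAlgebra.supported_eq_span_single,
        this]
      rfl
    · have : {a : Fin n →₀ ℕ | ((Finsupp.degree a : ℕ) : ℤ) = d} = ∅ :=
        Set.eq_empty_of_forall_notMem fun a (ha : ((Finsupp.degree a : ℕ) : ℤ) = d) => by omega
      rw [this, Set.image_empty, Submodule.span_empty]

theorem exists_isHomogeneousBasis_barD {W : Type} [AddCommGroup W] [Module K W]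
    {GW : ℤ → Submodule K W} {κ : Type} {b : Module.Basis κ K W} {deg : κ → ℤ}
    (hW : IsHomogeneousBasis b deg GW) :
    ∀ i, ∃ (κ' : Type) (d : Module.Basis κ' K (barD K n W i)) (deg' : κ' → ℤ),
      IsHomogeneousBasis d deg' (barDGrade K n W GW i)
  | 0 => ⟨κ, b, deg, hW⟩
  | i + 1 => by
    obtain ⟨_, _, _, h⟩ := exists_isHomogeneousBasis_barD hW i
    exact ⟨_, _, _, (isHomogeneousBasis_monomial n).tensor h⟩

theorem finiteDimensional_barChain {V W : Type} [AddCommGroup V] [Module K V] [AddCommGroup W]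
    [Module K W] {GV : ℤ → Submodule K V} {GW : ℤ → Submodule K W} {ι κ : Type}
    {bV : Module.Basis ι K V} {bW : Module.Basis κ K W} {degV : ι → ℤ} {degW : κ → ℤ}
    (hV : IsHomogeneousBasis bV degV GV) (hW : IsHomogeneousBasis bW degW GW) (i : ℕ) (j : ℤ) :
    FiniteDimensional K (barChain (n := n) GV GW i j) := by
  obtain ⟨_, _, _, h⟩ := exists_isHomogeneousBasis_barD (n := n) hW i
  exact (hV.tensor h).finiteDimensional j

section Dimension

variable {GM : ℤ → Submodule K M} {GN : ℤ → Submodule K N} {ι κ : Type}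
  {bM : Module.Basis ι K M} {bN : Module.Basis κ K N} {degM : ι → ℤ} {degN : κ → ℤ}

theorem range_barB_inf_barChain (hM : IsHomogeneousBasis bM degM GM)
    (hN : IsHomogeneousBasis bN degN GN)
    (hμ : IsGradedMap (tensorGrade K GM (polyGrade K n)) GM (smulMapM K n M))
    (hc : IsGradedMap (barDGrade K n N GN 1) (barDGrade K n N GN 0) (barC K n N 0))
    (i : ℕ) (j : ℤ) :
    LinearMap.range (barB K n N M i) ⊓ barChain GM GN i j =
      (barChain GM GN (i + 1) j).map (barB K n N M i) := by
  obtain ⟨_, d, _, hd⟩ := exists_isHomogeneousBasis_barD (n := n) hN i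
  obtain ⟨_, d', _, hd'⟩ := exists_isHomogeneousBasis_barD (n := n) hN (i + 1)
  exact (hM.tensor hd').range_inf_eq_map (hM.tensor hd) (hμ.barDiff (isGradedMap_barC hc i)) j

theorem torStrandDim_zero (hM : IsHomogeneousBasis bM degM GM)
    (hN : IsHomogeneousBasis bN degN GN)
    (hμ : IsGradedMap (tensorGrade K GM (polyGrade K n)) GM (smulMapM K n M))
    (hc : IsGradedMap (barDGrade K n N GN 1) (barDGrade K n N GN 0) (barC K n N 0)) (j : ℤ) :
    torStrandDim K n N M GM GN 0 j =
      Module.finrank K (barChain (n := n) GM GN 0 j) -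
        Module.finrank K ((barChain GM GN 1 j).map (barB K n N M 0)) := by
  rw [← range_barB_inf_barChain hM hN hμ hc 0 j]
  rfl

theorem torStrandDim_succ (hM : IsHomogeneousBasis bM degM GM)
    (hN : IsHomogeneousBasis bN degN GN)
    (hμ : IsGradedMap (tensorGrade K GM (polyGrade K n)) GM (smulMapM K n M))
    (hc : IsGradedMap (barDGrade K n N GN 1) (barDGrade K n N GN 0) (barC K n N 0))
    (i : ℕ) (j : ℤ) :
    torStrandDim K n N M GM GN (i + 1) j =
      Module.finrank K (barChain (n := n) GM GN (i + 1) j) -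
          Module.finrank K ((barChain GM GN (i + 1) j).map (barB K n N M i)) -
        Module.finrank K ((barChain GM GN (i + 2) j).map (barB K n N M (i + 1))) := by
  have := finiteDimensional_barChain (n := n) hM hN (i + 1) j
  rw [← finrank_ker_inf_add_finrank_map (barB K n N M i) (barChain GM GN (i + 1) j),
    Nat.add_sub_cancel, ← range_barB_inf_barChain hM hN hμ hc (i + 1) j]
  rfl

end Dimension

end BarHomology

section Vanishing

/-- The projection of `S^{⊗ i} ⊗ N` onto its normalized part, each factor `S` being projected to
the ideal `(x_1, …, x_n)`. -/
def barNormalization : (i : ℕ) → barD K n N i →ₗ[K] barD K n N i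
  | 0 => LinearMap.id
  | i + 1 => TensorProduct.map (augProj (aeval (0 : Fin n → K))) (barNormalization i)

/-- The contracting homotopy of the normalized bar complex. -/
def barHomotopy : (i : ℕ) → barD K n N i →ₗ[K] barD K n N (i + 1)
  | 0 => 0
  | i + 1 => nextHomotopy (aeval (0 : Fin n → K)) (barHomotopy i)

variable {K n N M}

theorem isContraction_barC : ∀ i, IsContraction (aeval (0 : Fin n → K)) (barC K n N i)
    (barHomotopy K n N i) (barNormalization K n N i)
  | 0 => .of_one_tmul fun y : N => one_smul (PS K n) y
  | i + 1 => (isContraction_barC i).next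

theorem barNormalization_eq_zero {W : Type} [AddCommGroup W] [Module K W]
    {GW : ℤ → Submodule K W} (hW : ∀ d < 0, GW d = ⊥) :
    ∀ (i : ℕ) {d : ℤ}, d < i → ∀ y ∈ barDGrade K n W GW i d, barNormalization K n W i y = 0
  | 0, d, hd => fun y hy => by
    rw [barDGrade, hW d (by simpa using hd)] at hy
    exact hy
  | i + 1, d, hd => fun z hz => by
    refine tensorGrade_le (W := LinearMap.ker (TensorProduct.map _ (barNormalization K n W i)))
      (fun p q hpq s hs y hy => ?_) hz
    rw [LinearMap.mem_ker, map_tmul]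
    by_cases hp : p ≤ 0
    · rw [augProj_eq_zero_of_mem_polyGrade hp hs, zero_tmul]
    · rw [barNormalization_eq_zero hW i (by push_cast at hd; omega) y hy, tmul_zero]

theorem ker_barB_inf_le_range {GM : ℤ → Submodule K M} {GN : ℤ → Submodule K N}
    (hM : ∀ d < 0, GM d = ⊥) (hN : ∀ d < 0, GN d = ⊥) {i : ℕ} {j : ℤ} (hj : j < i + 1) :
    LinearMap.ker (barB K n N M i) ⊓ barChain GM GN (i + 1) j ≤
      LinearMap.range (barB K n N M (i + 1)) := by
  rintro z ⟨hz, hzj⟩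
  have normalized_eq_zero :
      TensorProduct.map LinearMap.id (barNormalization K n N (i + 1)) z = 0 := by
    refine tensorGrade_le
      (W := LinearMap.ker (TensorProduct.map LinearMap.id (barNormalization K n N (i + 1))))
      (fun p q hpq m hm y hy => ?_) hzj
    rw [LinearMap.mem_ker, map_tmul]
    by_cases hp : p < 0
    · rw [hM p hp, Submodule.mem_bot] at hm
      rw [hm, map_zero, zero_tmul]
    · rw [barNormalization_eq_zero hN (i + 1) (by push_cast; omega) y hy, tmul_zero]
  have h := (isContraction_barC i).homotopy (μ := smulMapM K n M)
    (fun m => one_smul (PS K n) m) z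
  have hz : barDiff (smulMapM K n M) (barC K n N i) z = 0 := hz
  rw [hz, map_zero, add_zero] at h
  exact ⟨_, h.trans ((congrArg (z - ·) normalized_eq_zero).trans (sub_zero z))⟩

end Vanishing

section Transport

variable {K n N}

variable {N' : Type} [AddCommGroup N'] [Module K N'] [Module (PS K n) N']
  [IsScalarTower K (PS K n) N']

/-- The isomorphism `S^{⊗ i} ⊗ N ≃ S^{⊗ i} ⊗ N'` induced by `e` on each factor `S` and by `θ`. -/
def barDCongr {W W' : Type} [AddCommGroup W] [Module K W] [AddCommGroup W'] [Module K W']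
    (e : PS K n ≃ₗ[K] PS K n) (θ : W ≃ₗ[K] W') : (i : ℕ) → barD K n W i ≃ₗ[K] barD K n W' i
  | 0 => θ
  | i + 1 => TensorProduct.congr e (barDCongr e θ i)

theorem map_barDCongr_barDGrade {W W' : Type} [AddCommGroup W] [Module K W] [AddCommGroup W']
    [Module K W'] {GW : ℤ → Submodule K W} {GW' : ℤ → Submodule K W'}
    {e : PS K n ≃ₗ[K] PS K n} {θ : W ≃ₗ[K] W'}
    (he : ∀ d, (polyGrade K n d).map (e : PS K n →ₗ[K] PS K n) = polyGrade K n d)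
    (hθ : ∀ d, (GW d).map (θ : W →ₗ[K] W') = GW' d) : ∀ i d,
    (barDGrade K n W GW i d).map (barDCongr e θ i).toLinearMap = barDGrade K n W' GW' i d
  | 0 => hθ
  | i + 1 => map_congr_tensorGrade he (map_barDCongr_barDGrade he hθ i)

theorem barC_comp_barDCongr {e : PS K n ≃ₐ[K] PS K n} {θ : N ≃ₗ[K] N'}
    (hθ : ∀ (s : PS K n) x, θ (s • x) = e s • θ x) : ∀ i,
    (barC K n N' i).comp (barDCongr e.toLinearEquiv θ (i + 1)).toLinearMap =
      (barDCongr e.toLinearEquiv θ i).toLinearMap.comp (barC K n N i)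
  | 0 => TensorProduct.ext' fun s x => (hθ s x).symm
  | i + 1 => barDiff_comp_map (TensorProduct.ext' fun s t => (map_mul e s t).symm)
      (barC_comp_barDCongr hθ i)

theorem map_polyGrade_linearSubstEquiv (g : GL (Fin n) K) (d : ℤ) :
    (polyGrade K n d).map ((linearSubstEquiv g).toLinearEquiv : PS K n →ₗ[K] PS K n) =
      polyGrade K n d :=
  le_antisymm (Submodule.map_le_iff_le_comap.mpr fun _ hs => linearSubst_mem_polyGrade _ hs)
    fun s hs => ⟨(linearSubstEquiv g).symm s, linearSubst_mem_polyGrade _ hs,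
      (linearSubstEquiv g).apply_symm_apply s⟩

/-- The isomorphism `S/J ≃ S/g(J)` induced by `g`. -/
def quotLinearSubst (g : GL (Fin n) K) (J : Ideal (PS K n)) :
    (PS K n ⧸ J) ≃ₗ[K] (PS K n ⧸ J.map (coordChange K n g)) :=
  (Ideal.quotientEquivAlg J (J.map (coordChange K n g)) (linearSubstEquiv g) rfl).toLinearEquiv

theorem quotLinearSubst_smul (g : GL (Fin n) K) (J : Ideal (PS K n)) (s : PS K n)
    (x : PS K n ⧸ J) :
    quotLinearSubst g J (s • x) = linearSubstEquiv g s • quotLinearSubst g J x := by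
  obtain ⟨f, rfl⟩ := Ideal.Quotient.mk_surjective x
  exact map_mul (Ideal.quotientEquivAlg J (J.map (coordChange K n g)) (linearSubstEquiv g) rfl)
    (Ideal.Quotient.mk J s) (Ideal.Quotient.mk J f)

theorem map_quotGrade_quotLinearSubst (g : GL (Fin n) K) (J : Ideal (PS K n)) (d : ℤ) :
    (quotGrade K n J d).map (quotLinearSubst g J : _ →ₗ[K] _) =
      quotGrade K n (J.map (coordChange K n g)) d := by
  unfold quotGrade
  conv_rhs => rw [← map_polyGrade_linearSubstEquiv g d]
  rw [← Submodule.map_comp, ← Submodule.map_comp]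
  rfl

end Transport

section TwistedRank

variable {K n}

/-- The `i`-th bar differential of `M ⊗ S^{⊗ i} ⊗ N` in which `S` acts on `M` through the
substitution `A`. -/
def twistedBarB (A : Matrix (Fin n) (Fin n) K) (i : ℕ) :
    M ⊗[K] barD K n N (i + 1) →ₗ[K] M ⊗[K] barD K n N i :=
  barDiff (twistedSMul M A) (barC K n N i)

/-- The degree `j` part of `S/I ⊗ S^{⊗ i} ⊗ S/J`. -/
abbrev quotChain (I J : Ideal (PS K n)) (i : ℕ) (j : ℤ) :
    Submodule K ((PS K n ⧸ I) ⊗[K] barD K n (PS K n ⧸ J) i) :=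
  barChain (quotGrade K n I) (quotGrade K n J) i j

/-- The rank in degree `j` of the `i`-th bar differential for `S/I` and `S/J`, when `S` acts
on `S/I` through the substitution `A`. -/
def twistedRank (I J : Ideal (PS K n)) (A : Matrix (Fin n) (Fin n) K) (i : ℕ) (j : ℤ) : ℕ :=
  Module.finrank K ((quotChain I J (i + 1) j).map
    (twistedBarB (PS K n ⧸ J) (PS K n ⧸ I) A i))

variable (I J : Ideal (PS K n)) (g : GL (Fin n) K) (i : ℕ) (j : ℤ)

/-- The isomorphism `S/I ⊗ S^{⊗ i} ⊗ S/J ≃ S/I ⊗ S^{⊗ i} ⊗ S/g(J)` induced by `g` on all factors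
but the first. -/
def chainLinearSubst : (PS K n ⧸ I) ⊗[K] barD K n (PS K n ⧸ J) i ≃ₗ[K]
    (PS K n ⧸ I) ⊗[K] barD K n (PS K n ⧸ J.map (coordChange K n g)) i :=
  TensorProduct.congr (LinearEquiv.refl K (PS K n ⧸ I))
    (barDCongr (linearSubstEquiv g).toLinearEquiv (quotLinearSubst g J) i)

theorem map_chainLinearSubst_quotChain :
    (quotChain I J i j).map (chainLinearSubst I J g i).toLinearMap =
      quotChain I (J.map (coordChange K n g)) i j :=
  map_congr_tensorGrade (fun _ => Submodule.map_id _)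
    (map_barDCongr_barDGrade (map_polyGrade_linearSubstEquiv g)
      (map_quotGrade_quotLinearSubst g J) i) j

theorem barB_comp_chainLinearSubst :
    (barB K n (PS K n ⧸ J.map (coordChange K n g)) (PS K n ⧸ I) i).comp
        (chainLinearSubst I J g (i + 1)).toLinearMap =
      (chainLinearSubst I J g i).toLinearMap.comp
        (twistedBarB (PS K n ⧸ J) (PS K n ⧸ I) g.val i) :=
  barDiff_comp_map (TensorProduct.ext' fun _ _ => rfl)
    (barC_comp_barDCongr (quotLinearSubst_smul g J) i)

theorem finrank_quotChain_map_coordChange :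
    Module.finrank K (quotChain I (J.map (coordChange K n g)) i j) =
      Module.finrank K (quotChain I J i j) := by
  rw [← map_chainLinearSubst_quotChain]
  exact LinearEquiv.finrank_map_eq _ _

theorem finrank_map_barB_map_coordChange :
    Module.finrank K ((quotChain I (J.map (coordChange K n g)) (i + 1) j).map
      (barB K n (PS K n ⧸ J.map (coordChange K n g)) (PS K n ⧸ I) i)) =
      twistedRank I J g.val i j := by
  rw [← map_chainLinearSubst_quotChain, ← Submodule.map_comp, barB_comp_chainLinearSubst,
    Submodule.map_comp]
  exact LinearEquiv.finrank_map_eq _ _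

variable {I J} {ι κ : Type} {bI : Module.Basis ι K (PS K n ⧸ I)} {degI : ι → ℤ}
  {bJ : Module.Basis κ K (PS K n ⧸ J)} {degJ : κ → ℤ}

theorem torQQ_map_coordChange_zero (hI : IsHomogeneousBasis bI degI (quotGrade K n I))
    (hJ : IsHomogeneousBasis bJ degJ (quotGrade K n J)) :
    torQQ K n I (J.map (coordChange K n g)) 0 j =
      Module.finrank K (quotChain I J 0 j) - twistedRank I J g.val 0 j := by
  rw [← finrank_map_barB_map_coordChange, ← finrank_quotChain_map_coordChange I J g]
  exact torStrandDim_zero hI (hJ.map_linearEquiv (map_quotGrade_quotLinearSubst g J))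
    (isGradedMap_smulMapM_quotGrade I) (isGradedMap_barC_zero_quotGrade _) j

theorem torQQ_map_coordChange_succ (hI : IsHomogeneousBasis bI degI (quotGrade K n I))
    (hJ : IsHomogeneousBasis bJ degJ (quotGrade K n J)) :
    torQQ K n I (J.map (coordChange K n g)) (i + 1) j =
      Module.finrank K (quotChain I J (i + 1) j) - twistedRank I J g.val i j -
        twistedRank I J g.val (i + 1) j := by
  rw [← finrank_map_barB_map_coordChange, ← finrank_map_barB_map_coordChange,
    ← finrank_quotChain_map_coordChange I J g]
  exact torStrandDim_succ hI (hJ.map_linearEquiv (map_quotGrade_quotLinearSubst g J))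
    (isGradedMap_smulMapM_quotGrade I) (isGradedMap_barC_zero_quotGrade _) i j

theorem quotGrade_eq_bot_of_neg (I : Ideal (PS K n)) {d : ℤ} (hd : d < 0) :
    quotGrade K n I d = ⊥ := by
  simp only [quotGrade, polyGrade, if_neg hd.not_ge, Submodule.map_bot]

theorem torQQ_succ_eq_zero (hI : IsHomogeneousBasis bI degI (quotGrade K n I))
    (hJ : IsHomogeneousBasis bJ degJ (quotGrade K n J)) {i : ℕ} {j : ℤ} (hij : j < i + 1) :
    torQQ K n I J (i + 1) j = 0 := by
  have := finiteDimensional_barChain (n := n) hI hJ (i + 1) j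
  have hle := ker_barB_inf_le_range (n := n) (fun _ => quotGrade_eq_bot_of_neg I)
    (fun _ => quotGrade_eq_bot_of_neg J) hij
  have := Submodule.finiteDimensional_of_le (inf_le_right :
    LinearMap.range (barB K n (PS K n ⧸ J) (PS K n ⧸ I) (i + 1)) ⊓ quotChain I J (i + 1) j ≤ _)
  exact Nat.sub_eq_zero_of_le (Submodule.finrank_mono (le_inf hle inf_le_right))

theorem finrank_quotChain_congr {I' : Ideal (PS K n)} {bI' : Module.Basis ι K (PS K n ⧸ I')}
    (hI : IsHomogeneousBasis bI degI (quotGrade K n I))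
    (hI' : IsHomogeneousBasis bI' degI (quotGrade K n I'))
    (hJ : IsHomogeneousBasis bJ degJ (quotGrade K n J)) :
    Module.finrank K (quotChain I J i j) = Module.finrank K (quotChain I' J i j) := by
  obtain ⟨κ', d, deg', hd⟩ := exists_isHomogeneousBasis_barD hJ i
  exact ((hI.tensor hd).finrank_eq j).trans ((hI'.tensor hd).finrank_eq j).symm

end TwistedRank

section StandardMonomials

variable {K n}

/-- The monomials `x^u`, `u ∈ B`, are linearly independent modulo `I`, and every monomial is
congruent modulo `I` to a linear combination of those that are not `σ`-larger and have the same
degree. -/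
structure IsStandardSet (σ : MonomialOrder (Fin n)) (B : Set (Fin n →₀ ℕ))
    (I : Ideal (PS K n)) : Prop where
  eq_zero : ∀ f ∈ I, f ∈ restrictSupport K B → f = 0
  exists_normalForm : ∀ a, ∃ r ∈ restrictSupport K B, monomial a 1 - r ∈ I ∧
    ∀ u ∈ r.support, σ.toSyn u ≤ σ.toSyn a ∧ Finsupp.degree u = Finsupp.degree a

namespace IsStandardSet

variable {σ : MonomialOrder (Fin n)} {B : Set (Fin n →₀ ℕ)} {I : Ideal (PS K n)}

theorem bijective (h : IsStandardSet σ B I) : Function.Bijective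
    ((Ideal.Quotient.mkₐ K I).toLinearMap.domRestrict (restrictSupport K B)) := by
  constructor
  · rw [← LinearMap.ker_eq_bot, LinearMap.ker_eq_bot']
    exact fun r hr => Subtype.ext (h.eq_zero r (Ideal.Quotient.eq_zero_iff_mem.mp hr) r.2)
  · intro x
    obtain ⟨f, rfl⟩ := Ideal.Quotient.mkₐ_surjective K I x
    rw [← LinearMap.mem_range]
    induction f using MvPolynomial.induction_on' with
    | monomial a c =>
      obtain ⟨r, hr, har, -⟩ := h.exists_normalForm a
      have mk_eq : Ideal.Quotient.mkₐ K I (monomial a 1) = Ideal.Quotient.mkₐ K I r :=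
        Ideal.Quotient.eq.mpr har
      rw [← mul_one c, ← smul_eq_mul, ← smul_monomial, map_smul, mk_eq]
      exact Submodule.smul_mem _ c ⟨⟨r, hr⟩, rfl⟩
    | add p q hp hq => exact map_add (Ideal.Quotient.mkₐ K I) p q ▸ add_mem hp hq

/-- The basis of `S/I` consisting of the classes of the standard monomials. -/
def basis (h : IsStandardSet σ B I) : Module.Basis B K (PS K n ⧸ I) :=
  (basisRestrictSupport K B).map (LinearEquiv.ofBijective _ h.bijective)

theorem basis_repr_mk (h : IsStandardSet σ B I) {f r : PS K n} (hr : r ∈ restrictSupport K B)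
    (hfr : f - r ∈ I) (u : B) : h.basis.repr (Ideal.Quotient.mk I f) u = coeff u.1 r := by
  have mk_eq : Ideal.Quotient.mk I f =
      LinearEquiv.ofBijective _ h.bijective ⟨r, hr⟩ := Ideal.Quotient.eq.mpr hfr
  rw [mk_eq, basis, Module.Basis.map_repr, LinearEquiv.trans_apply,
    LinearEquiv.symm_apply_apply]
  rfl

theorem basis_apply (h : IsStandardSet σ B I) (u : B) :
    h.basis u = Ideal.Quotient.mk I (monomial u.1 1) := by
  classical
  refine h.basis.repr.injective (Finsupp.ext fun w => ?_)
  rw [h.basis_repr_mk (r := monomial u.1 1)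
      ((monomial_mem_restrictSupport K).mpr (Or.inl u.2)) (by simp),
    Module.Basis.repr_self, Finsupp.single_apply, coeff_monomial]
  simp only [Subtype.ext_iff]

theorem le_of_basis_repr_ne_zero (h : IsStandardSet σ B I) {a : Fin n →₀ ℕ} {u : B}
    (hu : h.basis.repr (Ideal.Quotient.mk I (monomial a 1)) u ≠ 0) :
    σ.toSyn u.1 ≤ σ.toSyn a ∧ Finsupp.degree u.1 = Finsupp.degree a := by
  obtain ⟨r, hr, har, hle⟩ := h.exists_normalForm a
  rw [h.basis_repr_mk hr har] at hu
  exact hle u.1 (mem_support_iff.mpr hu)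

theorem basis_repr_mk_of_monomial_mem (h : IsStandardSet σ B I)
    (hI : ∀ a ∉ B, monomial a 1 ∈ I) (f : PS K n) (u : B) :
    h.basis.repr (Ideal.Quotient.mk I f) u = coeff u.1 f := by
  classical
  induction f using MvPolynomial.induction_on' with
  | monomial a c =>
    by_cases ha : a ∈ B
    · exact h.basis_repr_mk ((monomial_mem_restrictSupport K).mpr (Or.inl ha)) (by simp) u
    · have hac : monomial a c ∈ I := by
        simpa only [C_mul_monomial, mul_one] using I.mul_mem_left (C c) (hI a ha)
      rw [Ideal.Quotient.eq_zero_iff_mem.mpr hac, coeff_monomial,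
        if_neg fun hau : a = u => ha (hau ▸ u.2), map_zero, Finsupp.zero_apply]
  | add p q hp hq => rw [map_add, map_add, Finsupp.add_apply, hp, hq, coeff_add]

theorem isHomogeneousBasis (h : IsStandardSet σ B I) : IsHomogeneousBasis h.basis
    (fun u => ((Finsupp.degree u.1 : ℕ) : ℤ)) (quotGrade K n I) where
  nonneg _ := Int.natCast_nonneg _
  finite_fiber d :=
    ((isHomogeneousBasis_monomial (K := K) n).finite_fiber d).preimage Subtype.val_injective.injOn
  eq_span d := by
    rw [quotGrade, (isHomogeneousBasis_monomial (K := K) n).eq_span d, Submodule.map_span]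
    refine le_antisymm (Submodule.span_le.mpr ?_) (Submodule.span_mono ?_)
    · rintro _ ⟨_, ⟨a, rfl : _ = d, rfl⟩, rfl⟩
      rw [SetLike.mem_coe, Module.Basis.mem_span_image]
      intro u hu
      rw [coe_basisMonomials] at hu
      exact congrArg Nat.cast (h.le_of_basis_repr_ne_zero (Finsupp.mem_support_iff.mp hu)).2
    · rintro _ ⟨u, hu, rfl⟩
      exact ⟨monomial u.1 1, ⟨u.1, hu, by rw [coe_basisMonomials]⟩, (h.basis_apply u).symm⟩

end IsStandardSet

/-- The exponents of the monomials outside `in_σ(I)`. -/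
def standardExponents (σ : MonomialOrder (Fin n)) (I : Ideal (PS K n)) : Set (Fin n →₀ ℕ) :=
  {a | monomial a 1 ∉ initialIdealO K n (fun a b => σ.toSyn a < σ.toSyn b) I}

theorem initialIdealO_eq_span (σ : MonomialOrder (Fin n)) (I : Ideal (PS K n)) :
    initialIdealO K n (fun a b => σ.toSyn a < σ.toSyn b) I =
      Ideal.span ((monomial · 1) '' {m | ∃ f ∈ I, f ≠ 0 ∧ σ.degree f = m}) := by
  refine congrArg Ideal.span (Set.ext fun g => ⟨?_, ?_⟩)
  · rintro ⟨f, hf, m, hm, hmax, rfl⟩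
    have hf0 : f ≠ 0 := support_nonempty.mp ⟨m, hm⟩
    refine ⟨m, ⟨f, hf, hf0, ?_⟩, rfl⟩
    exact (hmax _ (σ.degree_mem_support hf0)).resolve_right (σ.le_degree hm).not_gt
  · rintro ⟨_, ⟨f, hf, hf0, rfl⟩, rfl⟩
    refine ⟨f, hf, σ.degree f, σ.degree_mem_support hf0, fun m hm => ?_, rfl⟩
    exact (σ.le_degree hm).eq_or_lt.imp_left fun h => σ.toSyn.injective h

theorem mem_initialIdealO_iff {σ : MonomialOrder (Fin n)} {I : Ideal (PS K n)} {f : PS K n} :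
    f ∈ initialIdealO K n (fun a b => σ.toSyn a < σ.toSyn b) I ↔
      ∀ a ∈ f.support, ∃ g ∈ I, g ≠ 0 ∧ σ.degree g ≤ a := by
  rw [initialIdealO_eq_span, mem_ideal_span_monomial_image]
  exact forall₂_congr fun a _ =>
    ⟨fun ⟨_, ⟨g, hg, hg0, hm⟩, hle⟩ => ⟨g, hg, hg0, hm ▸ hle⟩,
      fun ⟨g, hg, hg0, hle⟩ => ⟨_, ⟨g, hg, hg0, rfl⟩, hle⟩⟩

theorem mem_standardExponents_iff {σ : MonomialOrder (Fin n)} {I : Ideal (PS K n)}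
    {a : Fin n →₀ ℕ} :
    a ∈ standardExponents σ I ↔ ∀ g ∈ I, g ≠ 0 → ¬ σ.degree g ≤ a := by
  classical
  rw [standardExponents, Set.mem_ofPred_eq, mem_initialIdealO_iff,
    support_monomial, if_neg one_ne_zero]
  simp only [Finset.mem_singleton, forall_eq, not_exists, not_and]

theorem isStandardSet_initialIdealO (σ : MonomialOrder (Fin n)) (I : Ideal (PS K n)) :
    IsStandardSet σ (standardExponents σ I)
      (initialIdealO K n (fun a b => σ.toSyn a < σ.toSyn b) I) where
  eq_zero f hf hB := by
    refine support_eq_empty.mp (Finset.eq_empty_of_forall_notMem fun a ha => ?_)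
    obtain ⟨g, hg, hg0, hle⟩ := mem_initialIdealO_iff.mp hf a ha
    exact mem_standardExponents_iff.mp (hB ha) g hg hg0 hle
  exists_normalForm a := by
    by_cases ha : a ∈ standardExponents σ I
    · refine ⟨monomial a 1, (monomial_mem_restrictSupport K).mpr (Or.inl ha), by simp, ?_⟩
      intro u hu
      obtain rfl := Finset.mem_singleton.mp (support_monomial_subset hu)
      exact ⟨le_rfl, rfl⟩
    · exact ⟨0, zero_mem _, by simpa only [sub_zero] using not_not.mp ha, by simp⟩

theorem exists_remainder (σ : MonomialOrder (Fin n)) (I : Ideal (PS K n)) (f : PS K n) :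
    ∃ r ∈ restrictSupport K (standardExponents σ I), f - r ∈ I ∧
      σ.toSyn (σ.degree r) ≤ σ.toSyn (σ.degree f) := by
  obtain ⟨q, r, hqr, hq, hr⟩ := σ.div_set (B := {g | g ∈ I ∧ g ≠ 0})
    (fun g hg => isUnit_iff_ne_zero.mpr (σ.leadingCoeff_ne_zero_iff.mpr hg.2)) f
  set p := Finsupp.linearCombination (PS K n)
    (fun g : {g | g ∈ I ∧ g ≠ 0} => (g : PS K n)) q
  have hpI : p ∈ I := I.sum_mem fun g _ => I.mul_mem_left _ g.2.1
  have hpf : σ.toSyn (σ.degree p) ≤ σ.toSyn (σ.degree f) :=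
    σ.degree_sum_le.trans (Finset.sup_le fun g _ =>
      (congrArg (fun s => σ.toSyn (σ.degree s)) (mul_comm (q g) g.1)).trans_le (hq g))
  refine ⟨r, fun a ha => ?_, by rwa [hqr, add_sub_cancel_right], ?_⟩
  · exact mem_standardExponents_iff.mpr fun g hg hg0 => hr a ha g ⟨hg, hg0⟩
  · rw [eq_sub_of_add_eq' hqr.symm]
    exact σ.degree_sub_le.trans (sup_le le_rfl hpf)

theorem isStandardSet_standardExponents (σ : MonomialOrder (Fin n)) {I : Ideal (PS K n)}
    (hI : IsHomog K n I) : IsStandardSet σ (standardExponents σ I) I where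
  eq_zero f hf hB := by
    by_contra hf0
    exact mem_standardExponents_iff.mp (hB (σ.degree_mem_support hf0)) f hf hf0 le_rfl
  exists_normalForm a := by
    obtain ⟨r, hr, har, hle⟩ := exists_remainder σ I (monomial a 1)
    have component_monomial :
        homogeneousComponent (Finsupp.degree a) (monomial a (1 : K)) = monomial a 1 := by
      rw [homogeneousComponent_of_mem (isHomogeneous_monomial 1 rfl), if_pos rfl]
    refine ⟨homogeneousComponent (Finsupp.degree a) r, ?_, ?_, fun u hu => ?_⟩
    · rw [mem_restrictSupport_iff, support_homogeneousComponent]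
      exact fun u hu => hr (Finset.mem_of_mem_filter u hu)
    · simpa only [map_sub, component_monomial] using hI _ har (Finsupp.degree a)
    · rw [support_homogeneousComponent, Finset.mem_filter] at hu
      exact ⟨(σ.le_degree hu.1).trans (hle.trans (σ.degree_monomial_le 1)), hu.2⟩

end StandardMonomials

section LowestTerms

variable {τ R : Type*} [CommRing R] (σ : MonomialOrder τ)

/-- The polynomials all of whose monomials are `σ`-greater than or equal to `x^u`. -/
def termsGE (R : Type*) [CommRing R] (u : τ →₀ ℕ) : Submodule R (MvPolynomial τ R) :=
  restrictSupport R {a | σ.toSyn u ≤ σ.toSyn a}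

variable {σ}

theorem le_of_mem_termsGE {u a : τ →₀ ℕ} {p : MvPolynomial τ R} (hp : p ∈ termsGE σ R u)
    (ha : coeff a p ≠ 0) : σ.toSyn u ≤ σ.toSyn a :=
  hp (mem_support_iff.mpr ha)

theorem mul_mem_termsGE {u v : τ →₀ ℕ} {p q : MvPolynomial τ R} (hp : p ∈ termsGE σ R u)
    (hq : q ∈ termsGE σ R v) : p * q ∈ termsGE σ R (u + v) := by
  classical
  intro a ha
  obtain ⟨x, hx, y, hy, rfl⟩ := Finset.mem_add.mp (support_mul p q ha)
  simpa only [Set.mem_ofPred_eq, map_add] using add_le_add (hp hx) (hq hy)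

theorem coeff_add_mul_of_mem_termsGE {u v : τ →₀ ℕ} {p q : MvPolynomial τ R}
    (hp : p ∈ termsGE σ R u) (hq : q ∈ termsGE σ R v) :
    coeff (u + v) (p * q) = coeff u p * coeff v q := by
  classical
  rw [coeff_mul, Finset.sum_eq_single_of_mem (u, v)
    (Finset.HasAntidiagonal.mem_antidiagonal.mpr rfl)]
  rintro ⟨x, y⟩ hxy hne
  rw [Finset.HasAntidiagonal.mem_antidiagonal] at hxy
  by_contra hmul
  have hx := le_of_mem_termsGE hp (left_ne_zero_of_mul hmul)
  have hy := le_of_mem_termsGE hq (right_ne_zero_of_mul hmul)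
  have hsum : σ.toSyn u + σ.toSyn v = σ.toSyn x + σ.toSyn y := by
    rw [← map_add, ← map_add, hxy]
  obtain ⟨hux, hvy⟩ := (add_eq_add_iff_eq_and_eq hx hy).mp hsum
  exact hne (Prod.ext (σ.toSyn.injective hux.symm) (σ.toSyn.injective hvy.symm))

theorem prod_mem_termsGE {ι : Type*} (s : Finset ι) {p : ι → MvPolynomial τ R}
    {u : ι → τ →₀ ℕ} (hp : ∀ k ∈ s, p k ∈ termsGE σ R (u k)) :
    ∏ k ∈ s, p k ∈ termsGE σ R (∑ k ∈ s, u k) := by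
  classical
  induction s using Finset.induction_on with
  | empty => exact fun a _ => by simp
  | insert k s hk ih =>
    rw [Finset.prod_insert hk, Finset.sum_insert hk]
    exact mul_mem_termsGE (hp k (s.mem_insert_self k))
      (ih fun l hl => hp l (Finset.mem_insert_of_mem hl))

theorem coeff_sum_prod_of_mem_termsGE {ι : Type*} (s : Finset ι) {p : ι → MvPolynomial τ R}
    {u : ι → τ →₀ ℕ} (hp : ∀ k ∈ s, p k ∈ termsGE σ R (u k)) :
    coeff (∑ k ∈ s, u k) (∏ k ∈ s, p k) = ∏ k ∈ s, coeff (u k) (p k) := by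
  classical
  induction s using Finset.induction_on with
  | empty => simp
  | insert k s hk ih =>
    have hs : ∀ l ∈ s, p l ∈ termsGE σ R (u l) := fun l hl => hp l (Finset.mem_insert_of_mem hl)
    rw [Finset.prod_insert hk, Finset.sum_insert hk, Finset.prod_insert hk, ← ih hs]
    exact coeff_add_mul_of_mem_termsGE (hp k (s.mem_insert_self k)) (prod_mem_termsGE s hs)

theorem coeff_sum_det_of_mem_termsGE {ι : Type*} [Fintype ι] [DecidableEq ι]
    {P : Matrix ι ι (MvPolynomial τ R)} {u : ι → τ →₀ ℕ}
    (hP : ∀ k l, P k l ∈ termsGE σ R (u k)) :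
    coeff (∑ k, u k) P.det = (Matrix.of fun k l => coeff (u k) (P k l)).det := by
  rw [Matrix.det_apply, Matrix.det_apply, coeff_sum]
  refine Finset.sum_congr rfl fun ρ _ => ?_
  rw [Units.smul_def, Units.smul_def, coeff_smul, ← Equiv.sum_comp ρ u,
    coeff_sum_prod_of_mem_termsGE _ fun i _ => hP (ρ i) i]
  rfl

end LowestTerms

section TorusDegeneration

variable {K n}

variable {σ : MonomialOrder (Fin n)} {B : Set (Fin n →₀ ℕ)} {I I' : Ideal (PS K n)}

/-- The `u`-th coordinate modulo `I` of the polynomial obtained from a given one by rescaling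
the variables, as a polynomial in the scaling factors. -/
def torusCoord (h : IsStandardSet σ B I) (u : B) : PS K n →ₗ[K] PS K n :=
  (basisMonomials (Fin n) K).constr K fun a =>
    monomial a (h.basis.repr (Ideal.Quotient.mk I (monomial a 1)) u)

theorem torusCoord_monomial_one (h : IsStandardSet σ B I) (u : B) (a : Fin n →₀ ℕ) :
    torusCoord h u (monomial a 1) =
      monomial a (h.basis.repr (Ideal.Quotient.mk I (monomial a 1)) u) := by
  simpa only [torusCoord, coe_basisMonomials] using (basisMonomials (Fin n) K).constr_basis K _ a

theorem eval_torusCoord (h : IsStandardSet σ B I) (u : B) (T : Fin n → K) (q : PS K n) :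
    eval T (torusCoord h u q) =
      h.basis.repr (Ideal.Quotient.mk I (linearSubst (Matrix.diagonal T) q)) u := by
  suffices (aeval T).toLinearMap.comp (torusCoord h u) = (h.basis.coord u).comp
      ((Ideal.Quotient.mkₐ K I).comp (linearSubst (Matrix.diagonal T))).toLinearMap from
    LinearMap.congr_fun this q
  refine (basisMonomials (Fin n) K).ext fun a => ?_
  simp only [coe_basisMonomials, LinearMap.comp_apply, AlgHom.toLinearMap_apply, AlgHom.comp_apply,
    torusCoord_monomial_one, linearSubst_diagonal_monomial, map_smul, Module.Basis.coord_apply,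
    Ideal.Quotient.mkₐ_eq_mk, aeval_monomial, eval_monomial, Algebra.algebraMap_self_apply,
    one_mul, smul_eq_mul]
  exact mul_comm _ _

theorem torusCoord_mem_termsGE (h : IsStandardSet σ B I) (u : B) (q : PS K n) :
    torusCoord h u q ∈ termsGE σ K u.1 := by
  suffices ⊤ ≤ (termsGE σ K u.1).comap (torusCoord h u) from this trivial
  rw [← (basisMonomials (Fin n) K).span_eq, Submodule.span_le]
  rintro _ ⟨a, rfl⟩
  rw [SetLike.mem_coe, Submodule.mem_comap, coe_basisMonomials, torusCoord_monomial_one]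
  refine (monomial_mem_restrictSupport K).mpr (or_iff_not_imp_right.mpr fun ha => ?_)
  exact (h.le_of_basis_repr_ne_zero ha).1

theorem coeff_torusCoord (h : IsStandardSet σ B I) (u : B) (q : PS K n) :
    coeff u.1 (torusCoord h u q) = coeff u.1 q := by
  classical
  suffices (lcoeff K u.1).comp (torusCoord h u) = lcoeff K u.1 from LinearMap.congr_fun this q
  refine (basisMonomials (Fin n) K).ext fun a => ?_
  simp only [coe_basisMonomials, LinearMap.comp_apply, lcoeff_apply, torusCoord_monomial_one,
    coeff_monomial]
  split_ifs with hau
  · subst hau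
    rw [← h.basis_apply, h.basis.repr_self, Finsupp.single_eq_same]
  · rfl

variable {Y κ : Type} [AddCommGroup Y] [Module K Y]

/-- The `(u, k)`-entry, in the column of `x^v ⊗ s ⊗ y`, of the matrix of the differential in
which `S` acts on `S/I` through the substitution `A` followed by a rescaling of the variables,
multiplied by `T^v` and written as a polynomial in the scaling factors `T`. -/
def torusEntry (h : IsStandardSet σ B I) (d : Module.Basis κ K Y) (c : PS K n ⊗[K] Y →ₗ[K] Y)
    (A : Matrix (Fin n) (Fin n) K) (u : B) (k : κ) (v : B) (s : PS K n) (y : Y) : PS K n :=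
  d.repr y k • torusCoord h u (linearSubst A s * monomial v.1 1) -
    d.repr (c (s ⊗ₜ[K] y)) k • monomial v.1 (Finsupp.single v 1 u)

variable (h : IsStandardSet σ B I) (d : Module.Basis κ K Y) (c : PS K n ⊗[K] Y →ₗ[K] Y)
  (A : Matrix (Fin n) (Fin n) K) (u : B) (k : κ) (v : B) (s : PS K n) (y : Y)

theorem torusEntry_mem_termsGE : torusEntry h d c A u k v s y ∈ termsGE σ K u.1 := by
  refine sub_mem (Submodule.smul_mem _ _ (torusCoord_mem_termsGE h u _))
    (Submodule.smul_mem _ _ ((monomial_mem_restrictSupport K).mpr ?_))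
  obtain rfl | hvu := eq_or_ne v u
  · exact Or.inl le_rfl
  · exact Or.inr (Finsupp.single_eq_of_ne' hvu)

theorem basis_repr_barDiff_twistedSMul :
    (h.basis.tensorProduct d).repr
        (barDiff (twistedSMul (PS K n ⧸ I) A) c (h.basis v ⊗ₜ[K] (s ⊗ₜ[K] y))) (u, k) =
      d.repr y k * h.basis.repr (Ideal.Quotient.mk I (linearSubst A s * monomial v.1 1)) u -
        d.repr (c (s ⊗ₜ[K] y)) k * Finsupp.single v 1 u := by
  have twist : twistedSMul (PS K n ⧸ I) A (h.basis v ⊗ₜ[K] s) =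
      Ideal.Quotient.mk I (linearSubst A s * monomial v.1 1) := by
    rw [h.basis_apply, map_mul]; rfl
  rw [barDiff_tmul, map_sub, Finsupp.sub_apply, twist,
    Module.Basis.tensorProduct_repr_tmul_apply, Module.Basis.tensorProduct_repr_tmul_apply,
    h.basis.repr_self]
  rfl

theorem eval_torusEntry (T : Fin n → K) :
    eval T (torusEntry h d c A u k v s y) = eval T (monomial v.1 1) *
      (h.basis.tensorProduct d).repr (barDiff (twistedSMul (PS K n ⧸ I) (Matrix.diagonal T * A)) c
        (h.basis v ⊗ₜ[K] (s ⊗ₜ[K] y))) (u, k) := by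
  rw [basis_repr_barDiff_twistedSMul, torusEntry, eval_sub, smul_eval, smul_eval,
    eval_torusCoord, map_mul, linearSubst_diagonal_monomial, ← linearSubst_comp,
    AlgHom.comp_apply, mul_smul_comm, ← Ideal.Quotient.mkₐ_eq_mk K, map_smul, map_smul,
    Finsupp.smul_apply, eval_monomial, eval_monomial]
  simp only [smul_eq_mul]
  ring

theorem coeff_torusEntry (h' : IsStandardSet σ B I') (hI' : ∀ a ∉ B, monomial a 1 ∈ I') :
    coeff u.1 (torusEntry h d c A u k v s y) =
      (h'.basis.tensorProduct d).repr
        (barDiff (twistedSMul (PS K n ⧸ I') A) c (h'.basis v ⊗ₜ[K] (s ⊗ₜ[K] y))) (u, k) := by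
  classical
  rw [basis_repr_barDiff_twistedSMul, h'.basis_repr_mk_of_monomial_mem hI', torusEntry, coeff_sub,
    coeff_smul, coeff_smul, coeff_torusCoord, coeff_monomial, smul_eq_mul, smul_eq_mul]
  refine congrArg (d.repr y k * _ - d.repr (c (s ⊗ₜ[K] y)) k * ·)
    (ite_eq_left_iff.mpr fun hvu => ?_)
  exact (Finsupp.single_eq_of_ne' fun hv => hvu (congrArg Subtype.val hv)).symm

end TorusDegeneration

section GenericRank

variable {K n}

variable {σ : MonomialOrder (Fin n)} {B : Set (Fin n →₀ ℕ)} {I I' : Ideal (PS K n)}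

theorem exists_det_diagonal_mul_ne_zero [Infinite K] {Y κ ι : Type} [AddCommGroup Y] [Module K Y]
    [Fintype ι] [DecidableEq ι] (h : IsStandardSet σ B I) (h' : IsStandardSet σ B I')
    (hI' : ∀ a ∉ B, monomial a 1 ∈ I') {d : Module.Basis κ K Y} {c : PS K n ⊗[K] Y →ₗ[K] Y}
    {A : Matrix (Fin n) (Fin n) K} {k : ι → B × κ} {v : ι → B} {s : ι → PS K n} {y : ι → Y}
    (hdet : (Matrix.of fun m l => (h'.basis.tensorProduct d).repr
      (barDiff (twistedSMul (PS K n ⧸ I') A) c (h'.basis (v l) ⊗ₜ[K] (s l ⊗ₜ[K] y l)))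
      (k m)).det ≠ 0) :
    ∃ T, (Matrix.of fun m l => (h.basis.tensorProduct d).repr
      (barDiff (twistedSMul (PS K n ⧸ I) (Matrix.diagonal T * A)) c
        (h.basis (v l) ⊗ₜ[K] (s l ⊗ₜ[K] y l))) (k m)).det ≠ 0 := by
  set P : Matrix ι ι (PS K n) := Matrix.of fun m l =>
    torusEntry h d c A (k m).1 (k m).2 (v l) (s l) (y l) with hP
  have mem_termsGE (m l) : P m l ∈ termsGE σ K (k m).1.1 := torusEntry_mem_termsGE ..
  have coeff_det : coeff (∑ m, (k m).1.1) P.det ≠ 0 := by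
    rw [coeff_sum_det_of_mem_termsGE mem_termsGE]
    simpa only [hP, Matrix.of_apply, coeff_torusEntry h d c A _ _ _ _ _ h' hI'] using hdet
  obtain ⟨T, hT⟩ : ∃ T, eval T P.det ≠ 0 := by
    by_contra! hzero
    exact coeff_det (by rw [MvPolynomial.funext fun T => (hzero T).trans (map_zero _).symm,
      coeff_zero])
  refine ⟨T, fun hzero => hT ?_⟩
  rw [RingHom.map_det]
  have eval_P : (eval T).mapMatrix P = Matrix.of fun m l => eval T (monomial (v l).1 1) *
      Matrix.of (fun m l => (h.basis.tensorProduct d).repr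
        (barDiff (twistedSMul (PS K n ⧸ I) (Matrix.diagonal T * A)) c
          (h.basis (v l) ⊗ₜ[K] (s l ⊗ₜ[K] y l))) (k m)) m l :=
    Matrix.ext fun m l => eval_torusEntry h d c A _ _ _ _ _ T
  rw [eval_P, Matrix.det_mul_row, hzero, mul_zero]

theorem exists_finrank_map_barDiff_le [Infinite K] {Y κ : Type} [AddCommGroup Y] [Module K Y]
    {d : Module.Basis κ K Y} {deg : κ → ℤ} {G : ℤ → Submodule K Y}
    (h : IsStandardSet σ B I) (h' : IsStandardSet σ B I') (hI' : ∀ a ∉ B, monomial a 1 ∈ I')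
    (hd : IsHomogeneousBasis d deg G) (c : PS K n ⊗[K] Y →ₗ[K] Y)
    (A : Matrix (Fin n) (Fin n) K) (j : ℤ) :
    ∃ T, Module.finrank K
        ((tensorGrade K (quotGrade K n I') (tensorGrade K (polyGrade K n) G) j).map
          (barDiff (twistedSMul (PS K n ⧸ I') A) c)) ≤
      Module.finrank K
        ((tensorGrade K (quotGrade K n I) (tensorGrade K (polyGrade K n) G) j).map
          (barDiff (twistedSMul (PS K n ⧸ I) (Matrix.diagonal T * A)) c)) := by
  have basis_S := (isHomogeneousBasis_monomial (K := K) n).tensor hd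
  have basis := h.isHomogeneousBasis.tensor basis_S
  have basis' := h'.isHomogeneousBasis.tensor basis_S
  have := basis.finiteDimensional j
  have tensor_apply {I : Ideal (PS K n)} (h : IsStandardSet σ B I) (p) :
      h.basis.tensorProduct ((basisMonomials (Fin n) K).tensorProduct d) p =
        h.basis p.1 ⊗ₜ[K] (basisMonomials (Fin n) K p.2.1 ⊗ₜ[K] d p.2.2) := by
    rw [Module.Basis.tensorProduct_apply', Module.Basis.tensorProduct_apply']
  obtain ⟨p, hp, k, hdet⟩ := basis'.exists_minor_ne_zero
    (barDiff (twistedSMul (PS K n ⧸ I') A) c) (h'.basis.tensorProduct d) j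
  simp only [tensor_apply] at hdet
  obtain ⟨T, hT⟩ := exists_det_diagonal_mul_ne_zero h h' hI' hdet
  refine ⟨T, le_finrank_map_of_det_ne_zero _ (fun l => ?_)
    (fun m => (h.basis.tensorProduct d).coord (k m)) hT⟩
  rw [← tensor_apply, ← hp l]
  exact basis.mem (p l)

theorem exists_twistedRank_le_twistedRank_diagonal_mul [Infinite K] {J : Ideal (PS K n)} {κ : Type}
    {b : Module.Basis κ K (PS K n ⧸ J)} {deg : κ → ℤ} (h : IsStandardSet σ B I)
    (h' : IsStandardSet σ B I') (hI' : ∀ a ∉ B, monomial a 1 ∈ I')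
    (hJ : IsHomogeneousBasis b deg (quotGrade K n J)) (A : Matrix (Fin n) (Fin n) K)
    (i : ℕ) (j : ℤ) :
    ∃ T, twistedRank I' J A i j ≤ twistedRank I J (Matrix.diagonal T * A) i j := by
  obtain ⟨κ', d, deg', hd⟩ := exists_isHomogeneousBasis_barD hJ i
  exact exists_finrank_map_barDiff_le h h' hI' hd (barC K n (PS K n ⧸ J) i) A j

theorem exists_twistedRank_le_of_eval_ne_zero {J : Ideal (PS K n)} {ι κ : Type}
    {bI : Module.Basis ι K (PS K n ⧸ I)} {bJ : Module.Basis κ K (PS K n ⧸ J)} {degI : ι → ℤ}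
    {degJ : κ → ℤ} (hI : IsHomogeneousBasis bI degI (quotGrade K n I))
    (hJ : IsHomogeneousBasis bJ degJ (quotGrade K n J)) (A₀ : Matrix (Fin n) (Fin n) K)
    (i : ℕ) (j : ℤ) :
    ∃ F : MvPolynomial (Fin n × Fin n) K, eval (Function.uncurry A₀) F ≠ 0 ∧
      ∀ A : Matrix (Fin n) (Fin n) K, eval (Function.uncurry A) F ≠ 0 →
        twistedRank I J A₀ i j ≤ twistedRank I J A i j := by
  have : FiniteDimensional K (quotChain I J (i + 1) j) :=
    finiteDimensional_barChain hI hJ (i + 1) j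
  have polynomial_family (z) : IsPolynomialFamily K fun t : Fin n × Fin n → K =>
      twistedBarB (PS K n ⧸ J) (PS K n ⧸ I) (Matrix.of (Function.curry t)) i z :=
    isPolynomialFamily_barDiff_twistedSMul (barC K n (PS K n ⧸ J) i) z
  obtain ⟨F, hF, hrank⟩ := IsPolynomialFamily.exists_finrank_map_le polynomial_family
    (quotChain I J (i + 1) j) (Function.uncurry A₀)
  exact ⟨F, hF, fun A hA => hrank (Function.uncurry A) hA⟩

theorem exists_forall_twistedRank_le_twistedRank {J : Ideal (PS K n)} {ι κ : Type}
    {bI : Module.Basis ι K (PS K n ⧸ I)} {bJ : Module.Basis κ K (PS K n ⧸ J)} {degI : ι → ℤ}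
    {degJ : κ → ℤ} (hI : IsHomogeneousBasis bI degI (quotGrade K n I))
    (hJ : IsHomogeneousBasis bJ degJ (quotGrade K n J)) (i : ℕ) (j : ℤ) :
    ∃ A₀, ∀ A, twistedRank I J A i j ≤ twistedRank I J A₀ i j := by
  have : FiniteDimensional K (quotChain I J (i + 1) j) :=
    finiteDimensional_barChain hI hJ (i + 1) j
  have bdd : BddAbove (Set.range fun A => twistedRank I J A i j) :=
    ⟨_, Set.forall_mem_range.mpr fun A => Submodule.finrank_map_le _ _⟩
  obtain ⟨A₀, hA₀⟩ := Nat.sSup_mem (Set.range_nonempty _) bdd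
  exact ⟨A₀, fun A => (le_csSup bdd ⟨A, rfl⟩).trans_eq hA₀.symm⟩

theorem exists_twistedRank_le [Infinite K] {J : Ideal (PS K n)} {κ : Type}
    {b : Module.Basis κ K (PS K n ⧸ J)} {deg : κ → ℤ} (h : IsStandardSet σ B I)
    (h' : IsStandardSet σ B I') (hI' : ∀ a ∉ B, monomial a 1 ∈ I')
    (hJ : IsHomogeneousBasis b deg (quotGrade K n J)) (i : ℕ) (j : ℤ) :
    ∃ F : MvPolynomial (Fin n × Fin n) K, F ≠ 0 ∧ ∀ A : Matrix (Fin n) (Fin n) K,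
      eval (Function.uncurry A) F ≠ 0 → ∀ A', twistedRank I' J A' i j ≤ twistedRank I J A i j := by
  obtain ⟨A₀, hA₀⟩ := exists_forall_twistedRank_le_twistedRank h'.isHomogeneousBasis hJ i j
  obtain ⟨T, hT⟩ := exists_twistedRank_le_twistedRank_diagonal_mul h h' hI' hJ A₀ i j
  obtain ⟨F, hF, hrank⟩ := exists_twistedRank_le_of_eval_ne_zero h.isHomogeneousBasis hJ
    (Matrix.diagonal T * A₀) i j
  exact ⟨F, fun hzero => hF (by rw [hzero, map_zero]),
    fun A hA A' => (hA₀ A').trans (hT.trans (hrank A hA))⟩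

end GenericRank

section Comparison

variable {K n}

theorem torQQ_map_coordChange_le {I I' J : Ideal (PS K n)} {ι κ : Type}
    {bI : Module.Basis ι K (PS K n ⧸ I)} {bI' : Module.Basis ι K (PS K n ⧸ I')}
    {bJ : Module.Basis κ K (PS K n ⧸ J)} {degI : ι → ℤ} {degJ : κ → ℤ}
    (hI : IsHomogeneousBasis bI degI (quotGrade K n I))
    (hI' : IsHomogeneousBasis bI' degI (quotGrade K n I'))
    (hJ : IsHomogeneousBasis bJ degJ (quotGrade K n J)) {g g' : GL (Fin n) K} {j : ℤ}
    (hrank : ∀ i < j.toNat + 1, twistedRank I' J g'.val i j ≤ twistedRank I J g.val i j) (i : ℕ) :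
    torQQ K n I (J.map (coordChange K n g)) i j ≤
      torQQ K n I' (J.map (coordChange K n g')) i j := by
  have hdim := finrank_quotChain_congr i j hI hI' hJ
  cases i with
  | zero =>
    rw [torQQ_map_coordChange_zero g j hI hJ, torQQ_map_coordChange_zero g' j hI' hJ, hdim]
    exact Nat.sub_le_sub_left (hrank 0 (by omega)) _
  | succ i =>
    obtain hij | hij := lt_or_ge j (i + 1)
    · rw [torQQ_succ_eq_zero hI (hJ.map_linearEquiv (map_quotGrade_quotLinearSubst g J)) hij]
      exact Nat.zero_le _
    · rw [torQQ_map_coordChange_succ g i j hI hJ, torQQ_map_coordChange_succ g' i j hI' hJ, hdim]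
      exact tsub_le_tsub (Nat.sub_le_sub_left (hrank i (by omega)) _) (hrank (i + 1) (by omega))

end Comparison

theorem tor_dim_general_le_initial_term_order_general [Infinite K] (j : ℤ)
    (σ : MonomialOrder (Fin n)) (I J : Ideal (PS K n)) (hI : IsHomog K n I) (hJ : IsHomog K n J) :
    generally K n fun h => ∀ (h' : GL (Fin n) K) (i : ℕ),
      torQQ K n I (J.map (coordChange K n h)) i j ≤
        torQQ K n (initialIdealO K n (fun a b => σ.toSyn a < σ.toSyn b) I)
          (J.map (coordChange K n h')) i j := by
  have std_I := isStandardSet_standardExponents σ hI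
  have std_in := isStandardSet_initialIdealO σ I
  have basis_J := (isStandardSet_standardExponents σ hJ).isHomogeneousBasis
  choose F hF hrank using fun i =>
    exists_twistedRank_le std_I std_in (fun _ => not_not.mp) basis_J i j
  refine ⟨∏ i ∈ Finset.range (j.toNat + 1), F i, Finset.prod_ne_zero_iff.mpr fun i _ => hF i,
    fun h hh h' => ?_⟩
  rw [map_prod, Finset.prod_ne_zero_iff] at hh
  exact torQQ_map_coordChange_le std_I.isHomogeneousBasis std_in.isHomogeneousBasis basis_J
    fun i hi => hrank i h.val (hh i (Finset.mem_range.mpr hi)) h'.val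

/-- **Remark 2.7** (Caviglia–Murai; cf. Conca, Question 6.1): fix `j`, homogeneous ideals
`I, J ⊆ S` and any term order `>_σ` on the monomials of `S`.  For a general change of
coordinates `h ∈ GL_n(K)`,
`dim_K Tor_i(S/I, S/h(J))_j ≤ dim_K Tor_i(S/in_σ(I), S/h(J))_j` for all `i`. -/
theorem tor_dim_general_le_initial_term_order [Infinite K] (j : ℤ)
    (σ : MonomialOrder (Fin n))
    (I J : Ideal (PS K n)) (hI : IsHomog K n I) (hJ : IsHomog K n J) :
    generally K n (fun h => ∀ i : ℕ,
      torQQ K n I (Ideal.map (coordChange K n h) J) i j ≤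
        torQQ K n (initialIdealO K n (fun a b => σ.toSyn a < σ.toSyn b) I)
          (Ideal.map (coordChange K n h) J) i j) := by
  obtain ⟨F, hF, hle⟩ := tor_dim_general_le_initial_term_order_general K n j σ I J hI hJ
  exact ⟨F, hF, fun h hh => hle h hh h⟩

end
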